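/- If q is an odd prime power or a product of two distinct odd primes, then the Erdős conjecture is true mod q, i.e. there is no Erdősian function f mod q with Σ_{n≥1} f(n)/n = 0. -/

import Mathlib

open Filter Topology Finset

/-- `f : ℕ → ℤ` is Erdősian mod `q`: periodic with period `q`, takes values `±1`
off multiples of `q`, and `0` on multiples of `q`. -/
def IsErdosian (q : ℕ) (f : ℕ → ℤ) : Prop :=
  (∀ n : ℕ, 1 ≤ n → f (n + q) = f n) ∧
  (∀ n : ℕ, 1 ≤ n → ¬ q ∣ n → f n = 1 ∨ f n = -1) ∧
  (∀ n : ℕ, 1 ≤ n → q ∣ n → f n = 0)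

/-- The Erdős conjecture is false mod `q`: there is an Erdősian function mod `q`
whose partial sums `∑_{n=1}^N f(n)/n` tend to `0`. -/
def ErdosConjectureFalse (q : ℕ) : Prop :=
  ∃ f : ℕ → ℤ, IsErdosian q f ∧
    Tendsto (fun N : ℕ => ∑ n ∈ Finset.Icc 1 N, (f n : ℝ) / n) atTop (nhds 0)

/-- The Erdős conjecture holds (is true) mod `q`. -/
def ErdosConjectureHolds (q : ℕ) : Prop := ¬ ErdosConjectureFalse q

open Filter Topology Finset

lemma erd_div_one (k : ℕ) : ∀ (G : ℂ → ℂ), Differentiable ℂ G → ∀ t : ℂ, (k : ℕ∞) ≤ analyticOrderAt G t →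
    ∃ H : ℂ → ℂ, Differentiable ℂ H ∧ ∀ z, G z = (z - t) ^ k * H z := by
  induction k with
  | zero => intro G hG t _; exact ⟨G, hG, by simp⟩
  | succ k ih =>
    intro G hG t h
    have h0 : G t = 0 := apply_eq_zero_of_analyticOrderAt_ne_zero (by
      intro h'; rw [h'] at h; simp at h)
    have hd : Differentiable ℂ (dslope G t) := by
      rw [← differentiableOn_univ] at hG ⊢
      exact (Complex.differentiableOn_dslope Filter.univ_mem).2 hG
    have he : ∀ z, G z = (z - t) * dslope G t z := by
      intro z
      have := sub_smul_dslope G t z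
      rw [h0] at this; simpa using this.symm
    have ho : (k : ℕ∞) ≤ analyticOrderAt (dslope G t) t := by
      have hG' : G = (fun z => z - t) * dslope G t := by ext z; simpa using he z
      rw [hG', analyticOrderAt_mul (by fun_prop) (hd.analyticAt t)] at h
      have : analyticOrderAt (fun z : ℂ => z - t) t = 1 := analyticOrderAt_id_sub_const_self
      rw [this, add_comm 1] at h
      push_cast at h
      exact (ENat.add_le_add_iff_right (by simp)).1 h
    obtain ⟨H, hH, hh⟩ := ih _ hd t ho
    exact ⟨H, hH, fun z => by rw [he, hh, pow_succ]; ring⟩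

lemma erd_div_many (k : ℕ) (s : Finset ℂ) (G : ℂ → ℂ) (hG : Differentiable ℂ G)
    (hz : ∀ t ∈ s, (k : ℕ∞) ≤ analyticOrderAt G t) :
    ∃ H : ℂ → ℂ, Differentiable ℂ H ∧ ∀ z, G z = (∏ t ∈ s, (z - t) ^ k) * H z := by
  classical
  induction s using Finset.induction_on with
  | empty => exact ⟨G, hG, by simp⟩
  | insert a s ha ih =>
    obtain ⟨H, hH, hh⟩ := ih (fun t ht => hz t (by simp [ht]))
    have hp : Differentiable ℂ (fun z : ℂ => ∏ t ∈ s, (z - t) ^ k) := by fun_prop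
    have h1 : (k : ℕ∞) ≤ analyticOrderAt H a := by
      have h2 := hz a (by simp)
      have hG' : G = (fun z => ∏ t ∈ s, (z - t) ^ k) * H := by ext z; simpa using hh z
      rw [hG', analyticOrderAt_mul (hp.analyticAt a) (hH.analyticAt a)] at h2
      have h3 : analyticOrderAt (fun z : ℂ => ∏ t ∈ s, (z - t) ^ k) a = 0 := by
        rw [(hp.analyticAt a).analyticOrderAt_eq_zero]
        refine Finset.prod_ne_zero_iff.2 fun t ht => pow_ne_zero _ (sub_ne_zero.2 ?_)
        rintro rfl; exact ha ht
      rwa [h3, zero_add] at h2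
    obtain ⟨H', hH', hh'⟩ := erd_div_one k H hH a h1
    exact ⟨H', hH', fun z => by rw [hh, hh', Finset.prod_insert ha]; ring⟩

lemma erd_iter {Λ : Type*} [Fintype Λ] (g a : Λ → ℂ) (k : ℕ) :
    iteratedDeriv k (fun z : ℂ => ∑ l, g l * Complex.exp (a l * z)) =
      fun z => ∑ l, g l * a l ^ k * Complex.exp (a l * z) := by
  induction k with
  | zero => simp
  | succ k ih =>
    rw [iteratedDeriv_succ, ih]
    ext z
    have : HasDerivAt (fun z : ℂ => ∑ l, g l * a l ^ k * Complex.exp (a l * z))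
        (∑ l, g l * a l ^ k * (Complex.exp (a l * z) * (a l * 1))) z :=
      HasDerivAt.fun_sum fun l _ => (((hasDerivAt_id z).const_mul (a l)).cexp).const_mul _
    rw [this.deriv]
    exact Finset.sum_congr rfl fun l _ => by ring

/-- One-variable Schwarz lemma for exponential polynomials. -/
lemma erd_schwarz {Λ : Type*} [Fintype Λ] (g a : Λ → ℂ) (A R : ℝ) (S k : ℕ) (hS : 1 ≤ S)
    (hA : ∀ l, ‖a l‖ ≤ A) (hR : 2 * S ≤ R)
    (hv : ∀ t < S, ∀ j < k, ∑ l, g l * a l ^ j * Complex.exp (a l * (t : ℂ)) = 0)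
    (s : ℕ) (hs : s < S) :
    ‖∑ l, g l * a l ^ k * Complex.exp (a l * (s : ℂ))‖ ≤
      k.factorial * (2 * S / R) ^ (S * k) * ((∑ l, ‖g l‖) * Real.exp (A * R)) := by
  classical
  set G : ℂ → ℂ := fun z : ℂ => ∑ l, g l * Complex.exp (a l * z) with hGdef
  have hG : Differentiable ℂ G := by fun_prop
  have hS1 : (1 : ℝ) ≤ S := by exact_mod_cast hS
  have hR0 : 0 < R := by linarith
  set P : Finset ℂ := (Finset.range S).image (fun t : ℕ => (t : ℂ)) with hP
  have hprod : ∀ z : ℂ, ∏ t ∈ P, (z - t) ^ k = ∏ t ∈ Finset.range S, (z - (t : ℂ)) ^ k := by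
    intro z
    rw [hP, Finset.prod_image]
    intro x _ y _ h; exact Nat.cast_injective h
  obtain ⟨H, hH, hh⟩ := erd_div_many k P G hG (by
    intro t ht
    rw [hP, Finset.mem_image] at ht
    obtain ⟨t, ht, rfl⟩ := ht
    rw [natCast_le_analyticOrderAt_iff_iteratedDeriv_eq_zero (hG.analyticAt _)]
    intro j hj
    rw [hGdef, erd_iter]
    exact hv t (Finset.mem_range.1 ht) j hj)
  simp_rw [hprod] at hh
  set M := (∑ l, ‖g l‖) * Real.exp (A * R) with hM
  have hM0 : 0 ≤ M := by positivity
  have hGM : ∀ z : ℂ, ‖z‖ ≤ R → ‖G z‖ ≤ M := by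
    intro z hz
    rw [hM, Finset.sum_mul]
    refine (norm_sum_le _ _).trans (Finset.sum_le_sum fun l _ => ?_)
    rw [norm_mul, Complex.norm_exp]
    gcongr
    refine (Complex.re_le_norm _).trans ?_
    rw [norm_mul]
    exact mul_le_mul (hA l) hz (norm_nonneg _) ((norm_nonneg _).trans (hA l))
  have hHb : ∀ z : ℂ, ‖z‖ ≤ R → ‖H z‖ ≤ M / (R / 2) ^ (S * k) := by
    intro z hz
    refine Complex.norm_le_of_forall_mem_frontier_norm_le (U := Metric.ball 0 R) Metric.isBounded_ball
      hH.diffContOnCl (fun w hw => ?_) (z := z) ?_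
    · rw [frontier_ball _ hR0.ne', mem_sphere_zero_iff_norm] at hw
      rw [le_div_iff₀ (by positivity), mul_comm]
      refine le_trans ?_ (hGM w hw.le)
      rw [hh w, norm_mul]
      gcongr
      rw [norm_prod, mul_comm, pow_mul]
      calc ((R / 2) ^ k) ^ S = ∏ t ∈ Finset.range S, (R / 2) ^ k := by simp
        _ ≤ _ := by
          refine Finset.prod_le_prod (fun _ _ => by positivity) fun t ht => ?_
          rw [norm_pow]
          gcongr
          have h1 : ‖w‖ - ‖(t : ℂ)‖ ≤ ‖w - t‖ := norm_sub_norm_le _ _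
          have h2 : (t : ℝ) ≤ S := by exact_mod_cast (Finset.mem_range.1 ht).le
          rw [hw, Complex.norm_natCast] at h1
          linarith
    · rw [closure_ball _ hR0.ne']; simpa using hz
  have hs' : (s : ℝ) + 1 ≤ S := by exact_mod_cast hs
  have key : ∀ z ∈ Metric.sphere (s : ℂ) 1, ‖G z‖ ≤ (2 * S / R) ^ (S * k) * M := by
    intro z hz
    rw [mem_sphere_iff_norm] at hz
    have hzR : ‖z‖ ≤ R := by
      have : ‖z‖ ≤ ‖z - s‖ + ‖(s : ℂ)‖ := by simpa using norm_add_le (z - s) (s : ℂ)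
      rw [hz, Complex.norm_natCast] at this
      linarith
    rw [hh z, norm_mul]
    have h1 : ‖∏ t ∈ Finset.range S, (z - (t : ℂ)) ^ k‖ ≤ (S : ℝ) ^ (S * k) := by
      rw [norm_prod, mul_comm S k, pow_mul]
      calc _ ≤ ∏ t ∈ Finset.range S, (S : ℝ) ^ k := by
            refine Finset.prod_le_prod (fun _ _ => by positivity) fun t ht => ?_
            rw [norm_pow]
            gcongr
            have h1 : ‖z - t‖ ≤ ‖z - s‖ + ‖((s : ℤ) - (t : ℤ) : ℂ)‖ := by
              simpa using norm_add_le (z - s) ((s : ℂ) - t)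
            rw [hz, ← Int.cast_sub, Complex.norm_intCast] at h1
            have ht' := Finset.mem_range.1 ht
            have : |(s : ℤ) - t| + 1 ≤ S := by
              rcases abs_cases ((s : ℤ) - t) with h | h <;> omega
            have : ((|(s : ℤ) - t| : ℤ) : ℝ) + 1 ≤ S := by exact_mod_cast this
            push_cast at this h1
            linarith
        _ = _ := by simp
    calc _ ≤ (S : ℝ) ^ (S * k) * (M / (R / 2) ^ (S * k)) := by
          gcongr
          exact hHb z hzR
      _ = _ := by
        rw [show 2 * (S : ℝ) / R = S / (R / 2) by field_simp, div_pow _ (R / 2)]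
        rw [mul_div_assoc', div_mul_eq_mul_div]
  have := Complex.norm_iteratedDeriv_le_of_forall_mem_sphere_norm_le k one_pos hG.diffContOnCl key
  rw [hGdef, erd_iter] at this
  simpa [mul_assoc] using this

open Filter Topology Finset

section core
variable {Λ I J : Type*} [Fintype Λ] [Fintype I] [Fintype J]

/-- the basic exponential sum -/
noncomputable def erdSum (p : Λ → ℂ) (a : Λ → I → ℂ) (b : Λ → J → ℂ) (w : Multiset J) (v : Multiset I)
    (s : I → ℕ) : ℂ :=
  ∑ l, p l * (w.map (b l)).prod * (v.map (a l)).prod * Complex.exp (∑ i, (s i : ℂ) * a l i)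

lemma erd_core_vanish (p : Λ → ℂ) (a : Λ → I → ℂ) (b : Λ → J → ℂ) (x : I → J → ℂ)
    (hab : ∀ l i, a l i = ∑ j, x i j * b l j) (Y : ℕ) (s : I → ℕ)
    (hV : ∀ w : Multiset J, w.card < Y → erdSum p a b w 0 s = 0) (v : Multiset I) :
    ∀ w : Multiset J, w.card + v.card < Y → erdSum p a b w v s = 0 := by
  induction v using Multiset.induction with
  | empty => intro w hw; exact hV w (by simpa using hw)
  | cons i v ih =>
    intro w hw
    have h1 : erdSum p a b w (i ::ₘ v) s = ∑ j, x i j * erdSum p a b (j ::ₘ w) v s := by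
      simp only [erdSum, Multiset.map_cons, Multiset.prod_cons, Finset.mul_sum]
      rw [Finset.sum_comm]
      refine Finset.sum_congr rfl fun l _ => ?_
      rw [hab l i, Finset.sum_mul, Finset.mul_sum, Finset.sum_mul]
      exact Finset.sum_congr rfl fun j _ => by ring
    rw [h1]
    refine Finset.sum_eq_zero fun j _ => ?_
    rw [ih (j ::ₘ w) (by simp at hw ⊢; omega), mul_zero]

lemma erd_core_bound (p : Λ → ℂ) (a : Λ → I → ℂ) (b : Λ → J → ℂ) (c : J → I → ℂ)
    (hba : ∀ l j, b l j = ∑ i, c j i * a l i) (C M : ℝ) (hC0 : 0 ≤ C) (hM0 : 0 ≤ M) (hC : ∀ j, ∑ i, ‖c j i‖ ≤ C) (Y : ℕ)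
    (s : I → ℕ) (hM : ∀ v : Multiset I, v.card = Y → ‖erdSum p a b 0 v s‖ ≤ M) (w : Multiset J) :
    ∀ v : Multiset I, w.card + v.card = Y → ‖erdSum p a b w v s‖ ≤ C ^ w.card * M := by
  induction w using Multiset.induction with
  | empty => intro v hv; simpa using hM v (by simpa using hv)
  | cons j w ih =>
    intro v hw
    have h1 : erdSum p a b (j ::ₘ w) v s = ∑ i, c j i * erdSum p a b w (i ::ₘ v) s := by
      simp only [erdSum, Multiset.map_cons, Multiset.prod_cons, Finset.mul_sum]
      rw [Finset.sum_comm]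
      refine Finset.sum_congr rfl fun l _ => ?_
      rw [hba l j, Finset.sum_mul, Finset.mul_sum, Finset.sum_mul, Finset.sum_mul]
      exact Finset.sum_congr rfl fun j _ => by ring
    rw [h1]
    have h2 : ∀ i, ‖erdSum p a b w (i ::ₘ v) s‖ ≤ C ^ w.card * M := fun i =>
      ih (i ::ₘ v) (by simp at hw ⊢; omega)
    have hM0' : 0 ≤ C ^ w.card * M := by positivity
    calc _ ≤ ∑ i, ‖c j i‖ * (C ^ w.card * M) := by
          refine (norm_sum_le _ _).trans (Finset.sum_le_sum fun i _ => ?_)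
          rw [norm_mul]; gcongr; exact h2 i
      _ ≤ C * (C ^ w.card * M) := by rw [← Finset.sum_mul]; gcongr; exact hC j
      _ = _ := by rw [Multiset.card_cons, pow_succ]; ring

lemma erd_core (p : Λ → ℂ) (a : Λ → I → ℂ) (b : Λ → J → ℂ) (x : I → J → ℂ) (c : J → I → ℂ)
    (hab : ∀ l i, a l i = ∑ j, x i j * b l j) (hba : ∀ l j, b l j = ∑ i, c j i * a l i)
    (C A P R : ℝ) (hC0 : 0 ≤ C) (hC : ∀ j, ∑ i, ‖c j i‖ ≤ C) (hA1 : 1 ≤ A) (hA : ∀ l i, ‖a l i‖ ≤ A)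
    (hP : ∀ l, ‖p l‖ ≤ P) (hP0 : 0 ≤ P) (S Y K0 : ℕ) (hS : 1 ≤ S) (hR : 2 * S ≤ R)
    (hK0 : ∀ k, Y ≤ Fintype.card I * k → K0 ≤ S * k) (hY : 1 ≤ Y)
    (hV : ∀ w : Multiset J, w.card < Y → ∀ s : I → ℕ, (∀ i, s i < S) → erdSum p a b w 0 s = 0)
    (w : Multiset J) (hw : w.card = Y) (s : I → ℕ) (hs : ∀ i, s i < S) :
    ‖erdSum p a b w 0 s‖ ≤ C ^ Y * (Y.factorial * (2 * S / R) ^ K0 *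
      ((Fintype.card Λ * (P * A ^ Y * Real.exp (Fintype.card I * (S * A)))) * Real.exp (A * R))) := by
  classical
  have hS1 : (1 : ℝ) ≤ S := by exact_mod_cast hS
  have hR0 : 0 < R := by linarith
  rw [← hw]
  conv_rhs => rw [hw]
  conv_rhs => enter [1, 2]; rw [← hw]
  refine erd_core_bound p a b c hba C _ hC0 (by positivity) hC Y s (fun v hv => ?_) w 0 (by simpa using hw)
  -- pigeonhole
  obtain ⟨i, hi⟩ : ∃ i, Y ≤ Fintype.card I * v.count i := by
    by_contra! hcon
    have h1 : ∑ i, v.count i = v.card := Multiset.sum_count_eq_card (fun _ _ => Finset.mem_univ _)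
    have hne : (Finset.univ : Finset I).Nonempty := by
      by_contra hne
      rw [Finset.not_nonempty_iff_eq_empty] at hne
      rw [hne] at h1
      simp at h1
      omega
    have h2 : ∑ i, Fintype.card I * v.count i < ∑ _i : I, Y :=
      Finset.sum_lt_sum_of_nonempty hne fun i _ => hcon i
    rw [← Finset.mul_sum, h1, hv] at h2
    simp at h2
  set k := v.count i with hk
  set v' := v.filter (fun j => ¬ (i = j)) with hv'
  have hvs : ∀ l, (v.map (a l)).prod = (v'.map (a l)).prod * a l i ^ k := by
    intro l
    conv_lhs => rw [← Multiset.filter_add_not (fun j => i = j) v]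
    rw [Multiset.map_add, Multiset.prod_add, Multiset.filter_eq, Multiset.map_replicate,
      Multiset.prod_replicate, mul_comm]
  have hcard : v'.card + k = Y := by
    rw [← hv]
    conv_rhs => rw [← Multiset.filter_add_not (fun j => i = j) v]
    rw [Multiset.card_add, Multiset.filter_eq, Multiset.card_replicate, add_comm]
  set s' := Function.update s i 0 with hs'
  have hexp : ∀ l (t : ℕ), Complex.exp (∑ i', ((Function.update s i t i' : ℕ) : ℂ) * a l i') =
      Complex.exp (∑ i', (s' i' : ℂ) * a l i') * Complex.exp (a l i * t) := by
    intro l t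
    rw [← Complex.exp_add]
    congr 1
    rw [Finset.sum_eq_add_sum_sdiff_singleton_of_mem (Finset.mem_univ i),
      Finset.sum_eq_add_sum_sdiff_singleton_of_mem (Finset.mem_univ i) (fun i' => (s' i' : ℂ) * a l i')]
    simp only [hs', Function.update_self]
    have : ∀ t : ℕ, ∑ i' ∈ univ \ {i}, ((Function.update s i t i' : ℕ) : ℂ) * a l i' =
        ∑ i' ∈ univ \ {i}, (s i' : ℂ) * a l i' := fun t =>
      Finset.sum_congr rfl fun i' hi' => by
        rw [Function.update_of_ne (by simpa using hi')]
    rw [this, this]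
    push_cast
    ring
  set g : Λ → ℂ := fun l => p l * (v'.map (a l)).prod * Complex.exp (∑ i', (s' i' : ℂ) * a l i') with hg
  have key : ∀ (t j : ℕ), ∑ l, g l * a l i ^ j * Complex.exp (a l i * (t : ℂ)) =
      erdSum p a b 0 (v' + Multiset.replicate j i) (Function.update s i t) := by
    intro t j
    simp only [erdSum, hexp, Multiset.map_add, Multiset.prod_add, Multiset.map_replicate,
      Multiset.prod_replicate, Multiset.map_zero, Multiset.prod_zero, hg]
    exact Finset.sum_congr rfl fun l _ => by ring
  have hmain : erdSum p a b 0 v s = ∑ l, g l * a l i ^ k * Complex.exp (a l i * (s i : ℂ)) := by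
    rw [key, Function.update_eq_self]
    simp only [erdSum, Multiset.map_add, Multiset.prod_add, Multiset.map_replicate,
      Multiset.prod_replicate, hvs]
  rw [hmain]
  have hsch := erd_schwarz g (fun l => a l i) A R S k hS (fun l => hA l i) hR (by
    intro t ht j hj
    rw [key]
    refine erd_core_vanish p a b x hab Y _ (fun w hw => hV w hw _ ?_) _ 0 (by simp; omega)
    intro i'
    by_cases h : i' = i
    · subst h; simpa using ht
    · rw [Function.update_of_ne h]; exact hs i') (s i) (hs i)
  refine hsch.trans ?_
  have hq1 : 2 * (S : ℝ) / R ≤ 1 := (div_le_one hR0).2 hR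
  have hkY : k ≤ Y := by omega
  have hgb : ∀ l, ‖g l‖ ≤ P * A ^ Y * Real.exp (Fintype.card I * (S * A)) := by
    intro l
    rw [hg]
    simp only [norm_mul]
    have h1 : ∀ u : Multiset I, ‖(u.map (a l)).prod‖ ≤ A ^ u.card := by
      intro u
      induction u using Multiset.induction with
      | empty => simp
      | cons i u ih =>
        rw [Multiset.map_cons, Multiset.prod_cons, norm_mul, Multiset.card_cons, pow_succ, mul_comm]
        gcongr
        exact hA l i
    have h2 : ‖Complex.exp (∑ i', (s' i' : ℂ) * a l i')‖ ≤ Real.exp (Fintype.card I * (S * A)) := by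
      rw [Complex.norm_exp]
      gcongr
      refine (Complex.re_le_norm _).trans ((norm_sum_le _ _).trans ?_)
      calc _ ≤ ∑ _i' : I, (S : ℝ) * A := by
            refine Finset.sum_le_sum fun i' _ => ?_
            rw [norm_mul, Complex.norm_natCast]
            gcongr
            · have : s' i' ≤ S := by
                by_cases h : i' = i
                · subst h; simp [hs']
                · rw [hs', Function.update_of_ne h]; exact (hs i').le
              exact_mod_cast this
            · exact hA l i'
        _ = _ := by simp
    have h3 : A ^ v'.card ≤ A ^ Y := pow_le_pow_right₀ hA1 (by omega)
    gcongr
    · exact hP l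
    · exact (h1 v').trans h3
  have hsum : ∑ l, ‖g l‖ ≤ Fintype.card Λ * (P * A ^ Y * Real.exp (Fintype.card I * (S * A))) := by
    refine (Finset.sum_le_sum fun l _ => hgb l).trans ?_
    simp
  have hf : (k.factorial : ℝ) ≤ Y.factorial := by exact_mod_cast Nat.factorial_le hkY
  have hpw : (2 * (S : ℝ) / R) ^ (S * k) ≤ (2 * S / R) ^ K0 :=
    pow_le_pow_of_le_one (by positivity) hq1 (hK0 k hi)
  gcongr
end core

open Filter Topology Finset NumberField

lemma erd_siegel (K : Type) [Field K] [NumberField K] : ∃ C : ℝ, 1 ≤ C ∧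
    ∀ (ρ γ : Type) [Fintype ρ] [Fintype γ] (a : Matrix ρ γ (𝓞 K)), a ≠ 0 →
    0 < Fintype.card ρ → 2 * Fintype.card ρ ≤ Fintype.card γ → ∀ A : ℝ, 1 ≤ A →
    (∀ k l, house (a k l : K) ≤ A) → ∃ ξ : γ → 𝓞 K, ξ ≠ 0 ∧ a.mulVec ξ = 0 ∧
      ∀ l, house (ξ l : K) ≤ C * (C * Fintype.card γ * A) := by
  classical
  have h0 : ∃ c : ℝ, ∀ (ρ γ : Type) [Fintype ρ] [Fintype γ] (a : Matrix ρ γ (𝓞 K)), a ≠ 0 →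
    0 < Fintype.card ρ → Fintype.card ρ < Fintype.card γ → ∀ A : ℝ,
    (∀ k l, house (a k l : K) ≤ A) → ∃ ξ : γ → 𝓞 K, ξ ≠ 0 ∧ a.mulVec ξ = 0 ∧
      ∀ l, house (ξ l : K) ≤ c * (c * Fintype.card γ * A) ^
        ((Fintype.card ρ : ℝ) / (Fintype.card γ - Fintype.card ρ)) :=
    ⟨_, fun ρ γ _ _ a ha h0 h1 A hA =>
      house.exists_ne_zero_int_vec_house_le K a ha h0 h1 rfl hA rfl⟩
  obtain ⟨c, hc⟩ := h0
  refine ⟨max 1 |c|, le_max_left _ _, fun ρ γ _ _ a ha h0 h1 A hA1 hA => ?_⟩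
  obtain ⟨ξ, h2, h3, h4⟩ := hc ρ γ a ha h0 (by omega) A hA
  refine ⟨ξ, h2, h3, fun l => (h4 l).trans ?_⟩
  set C := max 1 |c|
  have hC1 : 1 ≤ C := le_max_left _ _
  have hcC : |c| ≤ C := le_max_right _ _
  have hp : (0 : ℝ) < Fintype.card ρ := by exact_mod_cast h0
  have hq : 2 * (Fintype.card ρ : ℝ) ≤ Fintype.card γ := by exact_mod_cast h1
  have hq1 : (1 : ℝ) ≤ Fintype.card γ := by
    have : 1 ≤ Fintype.card γ := by omega
    exact_mod_cast this
  set e := (Fintype.card ρ : ℝ) / (Fintype.card γ - Fintype.card ρ)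
  have he1 : e ≤ 1 := (div_le_one (by linarith)).2 (by linarith)
  have he0 : 0 ≤ e := div_nonneg hp.le (by linarith)
  have hb : 1 ≤ C * Fintype.card γ * A := one_le_mul_of_one_le_of_one_le
    (one_le_mul_of_one_le_of_one_le hC1 hq1) hA1
  calc _ ≤ |c| * |(c * Fintype.card γ * A) ^ e| := by rw [← abs_mul]; exact le_abs_self _
    _ ≤ C * (C * Fintype.card γ * A) ^ e := by
      refine mul_le_mul hcC ((Real.abs_rpow_le_abs_rpow _ _).trans ?_) (abs_nonneg _) (by linarith)
      refine Real.rpow_le_rpow (abs_nonneg _) ?_ he0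
      rw [abs_mul, abs_mul, abs_of_nonneg (by linarith : (0 : ℝ) ≤ Fintype.card γ),
        abs_of_nonneg (by linarith : (0 : ℝ) ≤ A)]
      gcongr
    _ ≤ C * (C * Fintype.card γ * A) ^ (1 : ℝ) := by
      gcongr
    _ = _ := by rw [Real.rpow_one]

section nf
variable {K : Type} [Field K] [NumberField K]

lemma erd_liouville (φ : K →+* ℂ) (x : 𝓞 K) (hx : x ≠ 0) (H : ℝ) (hH : house (x : K) ≤ H) :
    1 ≤ ‖φ x‖ * H ^ (Module.finrank ℚ K - 1) := by
  have h1 := norm_norm_le_norm_mul_house_pow (x : K) φ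
  have h2 : 1 ≤ ‖Algebra.norm ℚ (x : K)‖ := by
    rw [← RingOfIntegers.coe_norm]
    have h4 : ((Algebra.norm ℤ x : ℤ) : ℚ) = (RingOfIntegers.norm ℚ x : ℚ) := by
      rw [RingOfIntegers.coe_norm, Algebra.coe_norm_int]
    rw [← h4]
    have h3 : Algebra.norm ℤ x ≠ 0 := Algebra.norm_ne_zero_iff.2 hx
    have : 1 ≤ |Algebra.norm ℤ x| := Int.one_le_abs h3
    rw [← Rat.norm_cast_real, Real.norm_eq_abs]
    exact_mod_cast this
  refine h2.trans (h1.trans ?_)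
  gcongr
  exact house_nonneg _

lemma erd_house_le {x : K} {B : ℝ} (hB : 0 ≤ B) (h : ∀ τ : K →+* ℂ, ‖τ x‖ ≤ B) : house x ≤ B := by
  rw [house, pi_norm_le_iff_of_nonneg hB]
  exact h

lemma erd_house_aut (σ : K ≃ₐ[ℚ] K) (x : K) : house (σ x) ≤ house x :=
  erd_house_le (house_nonneg _) fun τ =>
    norm_embedding_le_house x (τ.comp (σ : K →+* K))

lemma erd_house_prod {ι : Type*} (s : Finset ι) (f : ι → K) (g : ι → ℝ)
    (h : ∀ i ∈ s, house (f i) ≤ g i) : house (∏ i ∈ s, f i) ≤ ∏ i ∈ s, g i := by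
  refine erd_house_le (Finset.prod_nonneg fun i hi => (house_nonneg _).trans (h i hi)) fun τ => ?_
  rw [map_prod, norm_prod]
  exact Finset.prod_le_prod (fun _ _ => norm_nonneg _) fun i hi =>
    (norm_embedding_le_house _ _).trans (h i hi)

/-- index of the integral basis -/
abbrev ErdI (K : Type) [Field K] [NumberField K] := Module.Free.ChooseBasisIndex ℤ (𝓞 K)

noncomputable def erdXi (s : ErdI K → ℕ) : 𝓞 K := ∑ i, (s i : 𝓞 K) * RingOfIntegers.basis K i

lemma erdXi_inj : Function.Injective (erdXi (K := K)) := by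
  intro s t h
  have h2 : ∑ i, ((s i : ℤ)) • RingOfIntegers.basis K i = ∑ i, (t i : ℤ) • RingOfIntegers.basis K i := by
    simpa [erdXi] using h
  ext i
  have := congrArg (fun x => (RingOfIntegers.basis K).repr x i) h2
  simp only [Module.Basis.repr_sum_self] at this
  exact_mod_cast this

lemma erdXi_house : ∃ c : ℝ, 1 ≤ c ∧ ∀ (L : ℕ) (s : ErdI K → ℕ), (∀ i, s i ≤ L) →
    house (erdXi s : K) ≤ c * L := by
  refine ⟨1 + ∑ i, house (RingOfIntegers.basis K i : K), ?_, fun L s hs => ?_⟩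
  · have := Finset.sum_nonneg (fun i (_ : i ∈ Finset.univ) => house_nonneg (RingOfIntegers.basis K i : K))
    linarith
  · have h1 : (erdXi s : K) = ∑ i, (s i : K) * (RingOfIntegers.basis K i : K) := by
      simp [erdXi]
    rw [h1]
    refine (house_sum_le_sum_house _ _).trans ?_
    simp_rw [house_nat_mul]
    calc _ ≤ ∑ i, (L : ℝ) * house (RingOfIntegers.basis K i : K) := by
          refine Finset.sum_le_sum fun i _ => ?_
          gcongr
          · exact house_nonneg _
          · exact hs i
      _ ≤ _ := by rw [← Finset.mul_sum]; nlinarith [(Nat.cast_nonneg L : (0:ℝ) ≤ L)]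

lemma erd_zpow_int (α : K) (hα : α ≠ 0) (d : ℕ) (h1 : IsIntegral ℤ (d * α)) (h2 : IsIntegral ℤ (d * α⁻¹))
    (h : ℝ) (hd : d ≤ h) (hh1 : house (d * α) ≤ h) (hh2 : house (d * α⁻¹) ≤ h)
    (B : ℕ) (k : ℤ) (hk : |k| ≤ B) :
    ∃ W : 𝓞 K, (W : K) = d ^ B * α ^ k ∧ house (W : K) ≤ h ^ B := by
  have key : ∀ γ : K, IsIntegral ℤ (d * γ) → house (d * γ) ≤ h → ∀ j : ℕ, j ≤ B →
      ∃ W : 𝓞 K, (W : K) = d ^ B * γ ^ j ∧ house (W : K) ≤ h ^ B := by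
    intro γ hγ hhγ j hj
    let g : 𝓞 K := ⟨d * γ, hγ⟩
    have hgv : ((g ^ j * (d : 𝓞 K) ^ (B - j) : 𝓞 K) : K) = (d * γ) ^ j * (d : K) ^ (B - j) := by
      have hg : (g : K) = d * γ := rfl
      rw [← hg]
      push_cast
      rfl
    refine ⟨g ^ j * (d : 𝓞 K) ^ (B - j), ?_, ?_⟩
    · rw [hgv]
      rw [mul_pow, mul_right_comm, ← pow_add, Nat.add_sub_cancel' hj]
    · rw [hgv]
      have h0 : 0 ≤ h := (Nat.cast_nonneg d).trans hd
      refine (house_mul_le _ _).trans ?_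
      calc _ ≤ h ^ j * h ^ (B - j) := by
            have := house_pow_le (d * γ) j
            have h3 := house_pow_le (d : K) (B - j)
            have h4 : house (d : K) = d := by
              have := house_intCast (K := K) (d : ℤ); simpa using this
            have := house_nonneg (d * γ)
            have := house_nonneg ((d : K) ^ (B - j))
            rw [h4] at h3
            refine mul_le_mul ((house_pow_le _ _).trans ?_) (h3.trans ?_) (house_nonneg _) (by positivity)
            · gcongr
            · gcongr
        _ = h ^ B := by rw [← pow_add, Nat.add_sub_cancel' hj]
  rcases le_total 0 k with h0 | h0
  · lift k to ℕ using h0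
    rw [abs_of_nonneg (by positivity)] at hk
    simpa using key α h1 hh1 k (by exact_mod_cast hk)
  · obtain ⟨j, rfl⟩ : ∃ j : ℕ, k = -(j : ℤ) := ⟨k.natAbs, by omega⟩
    rw [abs_neg, abs_of_nonneg (by positivity)] at hk
    have := key α⁻¹ h2 hh2 j (by exact_mod_cast hk)
    simpa using this

end nf

open Filter Topology Finset NumberField

section nf2
variable {K : Type} [Field K] [NumberField K] {ι : Type} [Fintype ι]

noncomputable def erdE (α : ι → K) (β : ι → 𝓞 K) (x : 𝓞 K) : K :=
  ∏ b, α b ^ (Algebra.trace ℤ (𝓞 K) (x * β b))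

noncomputable def erdU (φ : K →+* ℂ) (β : ι → 𝓞 K) (ℓ : ι → ℂ) (σ : K ≃ₐ[ℚ] K) : ℂ :=
  ∑ b, φ (σ (β b)) * ℓ b

noncomputable def erdTheta (φ : K →+* ℂ) (β : ι → 𝓞 K) (ℓ : ι → ℂ) (x : 𝓞 K) : ℂ :=
  ∑ σ : K ≃ₐ[ℚ] K, φ (σ x) * erdU φ β ℓ σ

lemma erdE_exp [IsGalois ℚ K] (φ : K →+* ℂ) (α : ι → K) (β : ι → 𝓞 K) (ℓ : ι → ℂ)
    (h : ∀ b, φ (α b) = Complex.exp (ℓ b)) (x : 𝓞 K) :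
    φ (erdE α β x) = Complex.exp (erdTheta φ β ℓ x) := by
  have h1 : erdTheta φ β ℓ x = ∑ b, (Algebra.trace ℤ (𝓞 K) (x * β b) : ℂ) * ℓ b := by
    simp only [erdTheta, erdU, Finset.mul_sum]
    rw [Finset.sum_comm]
    refine Finset.sum_congr rfl fun b _ => ?_
    have h2 := trace_eq_sum_automorphisms (K := ℚ) ((x * β b : 𝓞 K) : K)
    have h3 : ((Algebra.trace ℤ (𝓞 K) (x * β b) : ℤ) : ℚ) = Algebra.trace ℚ K ((x * β b : 𝓞 K) : K) :=
      Algebra.coe_trace_int _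
    rw [← h3] at h2
    have h4 := congrArg φ h2
    simp only [map_intCast, map_sum] at h4
    rw [h4, Finset.sum_mul]
    refine Finset.sum_congr rfl fun σ _ => ?_
    rw [← mul_assoc, ← map_mul, ← map_mul, ← map_mul]
  rw [h1, Complex.exp_sum, erdE, map_prod]
  refine Finset.prod_congr rfl fun b _ => ?_
  rw [map_zpow₀, h, Complex.exp_int_mul]

lemma erdXi_mul_trace (l s : ErdI K → ℕ) (y : 𝓞 K) :
    Algebra.trace ℤ (𝓞 K) (erdXi l * erdXi s * y) =
      ∑ i, ∑ j, (l i : ℤ) * s j * Algebra.trace ℤ (𝓞 K)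
        (RingOfIntegers.basis K i * RingOfIntegers.basis K j * y) := by
  rw [erdXi, erdXi, Finset.sum_mul_sum, Finset.sum_mul, map_sum]
  refine Finset.sum_congr rfl fun i _ => ?_
  rw [Finset.sum_mul, map_sum]
  refine Finset.sum_congr rfl fun j _ => ?_
  rw [show (l i : 𝓞 K) * RingOfIntegers.basis K i * (s j * RingOfIntegers.basis K j) * y =
    ((l i : ℤ) * s j) • (RingOfIntegers.basis K i * RingOfIntegers.basis K j * y) by
      rw [zsmul_eq_mul]; push_cast; ring, map_zsmul, smul_eq_mul]

lemma erd_denom (α : ι → K) : ∃ d : ℕ, d ≠ 0 ∧ (∀ b, IsIntegral ℤ ((d : K) * α b)) ∧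
    ∀ b, IsIntegral ℤ ((d : K) * (α b)⁻¹) := by
  classical
  have h1 : ∀ x : K, ∃ d : ℕ, d ≠ 0 ∧ IsIntegral ℤ ((d : K) * x) := by
    intro x
    have : IsAlgebraic ℤ x := (IsFractionRing.isAlgebraic_iff ℤ ℚ K).2 (Algebra.IsAlgebraic.isAlgebraic x)
    obtain ⟨y, hy, h⟩ := this.exists_integral_multiple
    refine ⟨y.natAbs, by simpa using hy, ?_⟩
    rw [zsmul_eq_mul] at h
    rcases Int.natAbs_eq y with h' | h'
    · rw [h'] at h; simpa using h
    · rw [h'] at h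
      have := h.neg
      simpa using this
  choose f hf0 hf using h1
  refine ⟨(∏ b, f (α b)) * ∏ b, f (α b)⁻¹, ?_, fun b => ?_, fun b => ?_⟩
  · exact mul_ne_zero (Finset.prod_ne_zero_iff.2 fun b _ => hf0 _) (Finset.prod_ne_zero_iff.2 fun b _ => hf0 _)
  · have h2 : f (α b) ∣ (∏ b, f (α b)) * ∏ b, f (α b)⁻¹ :=
      (Finset.dvd_prod_of_mem _ (Finset.mem_univ b)).mul_right _
    obtain ⟨k, hk⟩ := h2
    rw [hk]
    push_cast
    rw [mul_comm (f (α b) : K), mul_assoc]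
    exact (isIntegral_natCast k).mul (hf _)
  · have h2 : f (α b)⁻¹ ∣ (∏ b, f (α b)) * ∏ b, f (α b)⁻¹ :=
      Dvd.dvd.mul_left (Finset.dvd_prod_of_mem (fun b => f (α b)⁻¹) (Finset.mem_univ b)) _
    obtain ⟨k, hk⟩ := h2
    rw [hk]
    push_cast
    rw [mul_comm (f (α b)⁻¹ : K), mul_assoc]
    exact (isIntegral_natCast k).mul (hf _)

lemma erdE_int (α : ι → K) (β : ι → 𝓞 K) (hα : ∀ b, α b ≠ 0) : ∃ c : ℝ, 1 ≤ c ∧ ∀ L S : ℕ,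
    ∃ D : ℕ, D ≠ 0 ∧ (D : ℝ) ≤ c ^ (L * S) ∧ ∀ l s : ErdI K → ℕ, (∀ i, l i ≤ L) → (∀ i, s i ≤ S) →
      ∃ W : 𝓞 K, (W : K) = D * erdE α β (erdXi l * erdXi s) ∧ house (W : K) ≤ c ^ (L * S) := by
  classical
  obtain ⟨d, hd0, hd1, hd2⟩ := erd_denom α
  set h : ℝ := 1 + d + ∑ b, house ((d : K) * α b) + ∑ b, house ((d : K) * (α b)⁻¹) with hh
  have hs1 : 0 ≤ ∑ b, house ((d : K) * α b) := Finset.sum_nonneg fun _ _ => house_nonneg _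
  have hs2 : 0 ≤ ∑ b, house ((d : K) * (α b)⁻¹) := Finset.sum_nonneg fun _ _ => house_nonneg _
  have hdn : (0 : ℝ) ≤ d := Nat.cast_nonneg d
  have h1 : 1 ≤ h := by linarith
  set c0 : ℕ := ∑ b, ∑ i, ∑ j, (Algebra.trace ℤ (𝓞 K)
        (RingOfIntegers.basis K i * RingOfIntegers.basis K j * β b)).natAbs with hc0
  refine ⟨h ^ (c0 * Fintype.card ι), one_le_pow₀ h1, fun L S =>
    ⟨∏ _b : ι, d ^ (c0 * (L * S)), Finset.prod_ne_zero_iff.2 fun b _ => pow_ne_zero _ hd0, ?_, ?_⟩⟩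
  · push_cast
    rw [Finset.prod_const, Finset.card_univ, ← pow_mul, ← pow_mul]
    calc (d : ℝ) ^ (c0 * (L * S) * Fintype.card ι) ≤ h ^ (c0 * (L * S) * Fintype.card ι) := by
          gcongr; linarith
      _ = _ := by congr 1; ring
  · intro l s hl hs
    have hk : ∀ b, |Algebra.trace ℤ (𝓞 K) (erdXi l * erdXi s * β b)| ≤ ((c0 * (L * S) : ℕ) : ℤ) := by
      intro b
      rw [erdXi_mul_trace]
      refine (Finset.abs_sum_le_sum_abs _ _).trans ?_
      have : c0 ≥ ∑ i, ∑ j, (Algebra.trace ℤ (𝓞 K)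
        (RingOfIntegers.basis K i * RingOfIntegers.basis K j * β b)).natAbs :=
        Finset.single_le_sum (f := fun b => ∑ i, ∑ j, (Algebra.trace ℤ (𝓞 K)
        (RingOfIntegers.basis K i * RingOfIntegers.basis K j * β b)).natAbs) (fun _ _ => Nat.zero_le _) (Finset.mem_univ b)
      calc _ ≤ ∑ i, ∑ j, ((L * S : ℕ) : ℤ) * ((Algebra.trace ℤ (𝓞 K)
        (RingOfIntegers.basis K i * RingOfIntegers.basis K j * β b)).natAbs : ℤ) := by
            refine Finset.sum_le_sum fun i _ => (Finset.abs_sum_le_sum_abs _ _).trans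
              (Finset.sum_le_sum fun j _ => ?_)
            rw [abs_mul, Int.natCast_natAbs]
            gcongr
            rw [abs_of_nonneg (by positivity)]
            exact_mod_cast Nat.mul_le_mul (hl i) (hs j)
        _ = ((L * S : ℕ) : ℤ) * ((∑ i, ∑ j, (Algebra.trace ℤ (𝓞 K)
        (RingOfIntegers.basis K i * RingOfIntegers.basis K j * β b)).natAbs : ℕ) : ℤ) := by
            push_cast; simp only [Finset.mul_sum]
        _ ≤ _ := by rw [← Nat.cast_mul, mul_comm]; exact_mod_cast Nat.mul_le_mul_right _ this
    have key : ∀ b, ∃ W : 𝓞 K, (W : K) = d ^ (c0 * (L * S)) *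
        α b ^ (Algebra.trace ℤ (𝓞 K) (erdXi l * erdXi s * β b)) ∧ house (W : K) ≤ h ^ (c0 * (L * S)) := by
      intro b
      have e1 := Finset.single_le_sum (f := fun b => house ((d : K) * α b)) (fun _ _ => house_nonneg _)
        (Finset.mem_univ b)
      have e2 := Finset.single_le_sum (f := fun b => house ((d : K) * (α b)⁻¹)) (fun _ _ => house_nonneg _)
        (Finset.mem_univ b)
      exact erd_zpow_int (α b) (hα b) d (hd1 b) (hd2 b) h (by linarith) (by linarith) (by linarith) _ _ (hk b)
    choose W hW1 hW2 using key
    refine ⟨∏ b, W b, ?_, ?_⟩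
    · rw [erdE]
      push_cast
      rw [← Finset.prod_mul_distrib]
      exact Finset.prod_congr rfl fun b _ => hW1 b
    · push_cast
      refine (erd_house_prod _ _ (fun _ => h ^ (c0 * (L * S))) fun b _ => hW2 b).trans ?_
      rw [Finset.prod_const, Finset.card_univ, ← pow_mul, ← pow_mul]
      apply le_of_eq; congr 1; ring

lemma erd_dual (φ : K →+* ℂ) (σ : K ≃ₐ[ℚ] K) [DecidableEq (K ≃ₐ[ℚ] K)] : ∃ c : ErdI K → ℂ, ∀ τ : K ≃ₐ[ℚ] K,
    ∑ i, c i * φ (τ (RingOfIntegers.basis K i)) = if τ = σ then 1 else 0 := by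
  classical
  have h := (canonicalEmbedding.latticeBasis K).sum_repr
    (Pi.single (φ.comp (σ : K →+* K)) (1 : ℂ) : (K →+* ℂ) → ℂ)
  refine ⟨(canonicalEmbedding.latticeBasis K).repr (Pi.single (φ.comp (σ : K →+* K)) (1 : ℂ)), fun τ => ?_⟩
  have h2 := congrFun h (φ.comp (τ : K →+* K))
  simp only [Finset.sum_apply, Pi.smul_apply, canonicalEmbedding.latticeBasis_apply,
    canonicalEmbedding.apply_at, integralBasis_apply, smul_eq_mul] at h2
  refine Eq.trans (Finset.sum_congr rfl fun i _ => rfl) (h2.trans ?_)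
  rw [Pi.single_apply]
  congr 1
  refine propext ⟨fun h => ?_, fun h => by rw [h]⟩
  ext x
  exact φ.injective (congrFun (congrArg DFunLike.coe h) x)

lemma erd_dual' (φ : K →+* ℂ) (β : ι → 𝓞 K) (ℓ : ι → ℂ) (σ : K ≃ₐ[ℚ] K) (hσ : erdU φ β ℓ σ ≠ 0) :
    ∃ c : ErdI K → ℂ, ∀ y : 𝓞 K,
      φ (σ y) = ∑ i, c i * erdTheta φ β ℓ (y * RingOfIntegers.basis K i) := by
  classical
  obtain ⟨c, hc⟩ := erd_dual φ σ
  refine ⟨fun i => c i / erdU φ β ℓ σ, fun y => ?_⟩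
  have : ∀ i, c i / erdU φ β ℓ σ * erdTheta φ β ℓ (y * RingOfIntegers.basis K i) =
      ∑ τ : K ≃ₐ[ℚ] K, φ (τ y) * erdU φ β ℓ τ / erdU φ β ℓ σ * (c i * φ (τ (RingOfIntegers.basis K i))) := by
    intro i
    rw [erdTheta, Finset.mul_sum]
    refine Finset.sum_congr rfl fun τ _ => ?_
    push_cast
    rw [map_mul, map_mul]
    ring
  simp_rw [this]
  rw [Finset.sum_comm]
  simp_rw [← Finset.mul_sum, hc]
  simp [hσ]

lemma erdTheta_bound (φ : K →+* ℂ) (β : ι → 𝓞 K) (ℓ : ι → ℂ) : ∃ c : ℝ, 1 ≤ c ∧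
    ∀ (L : ℕ) (l : ErdI K → ℕ), (∀ i, l i ≤ L) → ∀ i,
      ‖erdTheta φ β ℓ (erdXi l * RingOfIntegers.basis K i)‖ ≤ c * L := by
  obtain ⟨cX, hcX1, hcX⟩ := erdXi_house (K := K)
  set c := ∑ i, ∑ σ, house (RingOfIntegers.basis K i : K) * ‖erdU φ β ℓ σ‖ with hc
  have hc0 : 0 ≤ c := Finset.sum_nonneg fun i _ => Finset.sum_nonneg fun σ _ =>
    mul_nonneg (house_nonneg _) (norm_nonneg _)
  refine ⟨1 + cX * c, by nlinarith, fun L l hl i => ?_⟩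
  have h2 : ∑ σ, house (RingOfIntegers.basis K i : K) * ‖erdU φ β ℓ σ‖ ≤ c :=
    Finset.single_le_sum (f := fun i => ∑ σ, house (RingOfIntegers.basis K i : K) * ‖erdU φ β ℓ σ‖)
      (fun i _ => Finset.sum_nonneg fun σ _ => mul_nonneg (house_nonneg _) (norm_nonneg _)) (Finset.mem_univ i)
  have h3 : ‖erdTheta φ β ℓ (erdXi l * RingOfIntegers.basis K i)‖ ≤
      ∑ σ, (cX * L) * (house (RingOfIntegers.basis K i : K) * ‖erdU φ β ℓ σ‖) := by
    refine (norm_sum_le _ _).trans (Finset.sum_le_sum fun σ _ => ?_)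
    rw [norm_mul, ← mul_assoc]
    gcongr
    refine (norm_embedding_le_house _ _).trans ((erd_house_aut _ _).trans ?_)
    push_cast
    refine (house_mul_le _ _).trans ?_
    gcongr
    · exact house_nonneg _
    · exact hcX L l hl
  rw [← Finset.mul_sum] at h3
  have hL : (0 : ℝ) ≤ L := Nat.cast_nonneg L
  have : cX * L * ∑ σ, house (RingOfIntegers.basis K i : K) * ‖erdU φ β ℓ σ‖ ≤ cX * L * c := by gcongr
  nlinarith

lemma erdTheta_xi (φ : K →+* ℂ) (β : ι → 𝓞 K) (ℓ : ι → ℂ) (y : 𝓞 K) (s : ErdI K → ℕ) :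
    erdTheta φ β ℓ (y * erdXi s) = ∑ i, (s i : ℂ) * erdTheta φ β ℓ (y * RingOfIntegers.basis K i) := by
  simp only [erdTheta, Finset.mul_sum]
  rw [Finset.sum_comm]
  refine Finset.sum_congr rfl fun σ _ => ?_
  simp only [erdXi]
  push_cast
  simp only [map_mul, map_sum, map_natCast, Finset.mul_sum, Finset.sum_mul]
  exact Finset.sum_congr rfl fun i _ => by ring

lemma erd_vand {Λ : Type*} [Fintype Λ] (f v : Λ → ℂ) (hf : Function.Injective f)
    (h : ∀ k : ℕ, ∑ l, v l * f l ^ k = 0) : v = 0 := by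
  let e := Fintype.equivFin Λ
  have := Matrix.eq_zero_of_forall_pow_sum_mul_pow_eq_zero (f := f ∘ e.symm) (v := v ∘ e.symm)
    (hf.comp e.symm.injective) (fun i => by
      rw [← h i]
      exact Equiv.sum_comp e.symm (fun l => v l * f l ^ (i : ℕ)))
  ext l
  have h2 := congrFun this (e l)
  simpa using h2

end nf2

open Filter Topology Finset NumberField

lemma erd_numeric (n Y L S T K0 c' : ℕ) (c cS cX cE C5 cθ Am P H A R z e1 e2 F : ℝ)
    (hY : 2 ≤ Y) (hTY : T ≤ Y) (hLS : L * S ≤ Y) (hL1 : 1 ≤ L) (hS1 : 1 ≤ S)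
    (hcY : c ≤ Y) (hS : 1 ≤ cS) (hSc : cS ≤ c) (hX : 1 ≤ cX) (hXc : cX ≤ c) (hE : 1 ≤ cE) (hEc : cE ≤ c)
    (hC5 : 0 ≤ C5) (hC5c : C5 ≤ c) (hθ : 1 ≤ cθ) (hθc : cθ ≤ c)
    (hAm : Am = (cX * L) ^ (n * T) * cE ^ (L * S))
    (hP : P = cS * (cS * (L : ℝ) ^ n * Am))
    (hH : H = (L : ℝ) ^ n * (P * (cX * L) ^ Y * cE ^ (L * S)))
    (hA : A = cθ * L) (he1 : e1 ≤ c ^ (L * S)) (he2 : e2 ≤ c ^ Y) (he10 : 0 ≤ e1) (he20 : 0 ≤ e2)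
    (hc' : c' = 4 * n + 10 + (4 * n + 6) * n + 1)
    (hz0 : 0 ≤ z) (hz : z * ((Y : ℝ) ^ Y) ^ c' ≤ 1)
    (hF : F ≤ cE ^ (L * S) * (C5 ^ Y * (Y.factorial * z * (((L : ℝ) ^ n * (P * A ^ Y * e1)) * e2))))
    (hfin : 1 ≤ F * H ^ (n - 1)) : False := by
  have hY2 : (2 : ℝ) ≤ Y := by exact_mod_cast hY
  have hL1' : (1 : ℝ) ≤ L := by exact_mod_cast hL1
  have hLY : (L : ℝ) ≤ Y := by
    have : L ≤ Y := by nlinarith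
    exact_mod_cast this
  have hc1 : 1 ≤ c := hS.trans hSc
  set Q : ℝ := (Y : ℝ) ^ Y with hQ
  have hyQ : (Y : ℝ) ≤ Q := le_self_pow₀ (by linarith) (by omega)
  have hQ2 : 2 ≤ Q := hY2.trans hyQ
  have hcQ : c ^ (L * S) ≤ Q := by
    calc c ^ (L * S) ≤ (Y : ℝ) ^ (L * S) := by gcongr
      _ ≤ Q := pow_le_pow_right₀ (by linarith) hLS
  have hcYQ : c ^ Y ≤ Q := by rw [hQ]; gcongr
  have hEQ : cE ^ (L * S) ≤ Q := le_trans (by gcongr) hcQ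
  have hLn : (L : ℝ) ^ n ≤ Q ^ n := by gcongr; linarith
  have hXL : cX * L ≤ (Y : ℝ) ^ 2 := by rw [sq]; gcongr; linarith
  have hXLY : (cX * L) ^ Y ≤ Q ^ 2 := by
    calc (cX * L) ^ Y ≤ ((Y : ℝ) ^ 2) ^ Y := by gcongr
      _ = Q ^ 2 := by rw [hQ, ← pow_mul, ← pow_mul, mul_comm]
  have hXLT : (cX * L) ^ (n * T) ≤ Q ^ (2 * n) := by
    have h1 : 1 ≤ cX * L := one_le_mul_of_one_le_of_one_le hX hL1'
    calc (cX * L) ^ (n * T) ≤ (cX * L) ^ (Y * n) :=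
          pow_le_pow_right₀ h1 (by rw [mul_comm]; gcongr)
      _ = ((cX * L) ^ Y) ^ n := by rw [pow_mul]
      _ ≤ (Q ^ 2) ^ n := by gcongr
      _ = _ := by rw [← pow_mul]
  have hcSQ : cS ≤ Q := by linarith
  have hAmQ : Am ≤ Q ^ (2 * n) * Q := by rw [hAm]; gcongr
  have hAm0 : 0 ≤ Am := by rw [hAm]; positivity
  have hPQ : P ≤ Q ^ (3 * n + 3) := by
    calc P ≤ Q * (Q * Q ^ n * (Q ^ (2 * n) * Q)) := by rw [hP]; gcongr
      _ = _ := by ring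
  have hP0 : 0 ≤ P := by rw [hP]; positivity
  have hHQ : H ≤ Q ^ (4 * n + 6) := by
    calc H ≤ Q ^ n * (Q ^ (3 * n + 3) * Q ^ 2 * Q) := by rw [hH]; gcongr
      _ = _ := by ring
  have hH0 : 0 ≤ H := by rw [hH]; positivity
  have hHn : H ^ (n - 1) ≤ Q ^ ((4 * n + 6) * n) := by
    calc H ^ (n - 1) ≤ (Q ^ (4 * n + 6)) ^ (n - 1) := by gcongr
      _ ≤ (Q ^ (4 * n + 6)) ^ n := pow_le_pow_right₀ (one_le_pow₀ (by linarith)) (Nat.sub_le _ _)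
      _ = _ := by rw [← pow_mul]
  have hAY : A ^ Y ≤ Q ^ 2 := by
    have hA' : A ≤ (Y : ℝ) ^ 2 := by rw [hA, sq]; gcongr; linarith
    have hA0 : 0 ≤ A := by rw [hA]; positivity
    calc A ^ Y ≤ ((Y : ℝ) ^ 2) ^ Y := by gcongr
      _ = Q ^ 2 := by rw [hQ, ← pow_mul, ← pow_mul, mul_comm]
  have hA0 : 0 ≤ A := by rw [hA]; positivity
  have hfac : (Y.factorial : ℝ) ≤ Q := by rw [hQ]; exact_mod_cast Nat.factorial_le_pow Y
  have hC5Q : C5 ^ Y ≤ Q := le_trans (by gcongr) hcYQ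
  have he1Q := he1.trans hcQ
  have he2Q := he2.trans hcYQ
  have hFQ : F ≤ z * Q ^ (4 * n + 10) := by
    calc F ≤ Q * (Q * (Q * z * ((Q ^ n * (Q ^ (3 * n + 3) * Q ^ 2 * Q)) * Q))) := by
          refine hF.trans ?_; gcongr
      _ = _ := by ring
  have h1 : 1 ≤ z * Q ^ (4 * n + 10) * Q ^ ((4 * n + 6) * n) := by
    refine hfin.trans ?_
    gcongr
  have h2 : z * Q ^ c' = z * Q ^ (4 * n + 10) * Q ^ ((4 * n + 6) * n) * Q := by
    rw [hc']; ring
  nlinarith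

section main
variable {K : Type} [Field K] [NumberField K] {ι : Type} [Fintype ι]

def erdAut (σ : K ≃ₐ[ℚ] K) (x : 𝓞 K) : 𝓞 K := ⟨σ x, x.2.map (σ.restrictScalars ℤ)⟩

lemma erdAut_coe (σ : K ≃ₐ[ℚ] K) (x : 𝓞 K) : (erdAut σ x : K) = σ x := rfl

lemma erd_house_mprod {J : Type*} (w : Multiset J) (f : J → 𝓞 K) (B : ℝ) 
    (h : ∀ j, house (f j : K) ≤ B) : house (((w.map f).prod : 𝓞 K) : K) ≤ B ^ w.card := by
  induction w using Multiset.induction with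
  | empty =>
    have := house_intCast (K := K) 1
    simp at this
    simp [this]
  | cons j w ih =>
    rw [Multiset.map_cons, Multiset.prod_cons, Multiset.card_cons, pow_succ, mul_comm]
    push_cast
    refine (house_mul_le _ _).trans ?_
    exact mul_le_mul ih (h j) (house_nonneg _) ((house_nonneg _).trans ih)
end main

open Filter Topology Finset NumberField

lemma erd_params (n m c' : ℕ) (hm : m + 1 ≤ n) (hc' : 1 ≤ c') (c : ℝ) : ∃ S T L : ℕ, 1 ≤ S ∧ 1 ≤ L ∧ 1 ≤ T ∧
    2 * (T ^ m * S ^ n) ≤ L ^ n ∧ ∀ Y : ℕ, T ≤ Y → 2 ≤ Y ∧ L * S ≤ Y ∧ c ≤ Y ∧ ∃ K0 : ℕ,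
      2 * (S : ℝ) ≤ Y / L ∧ (∀ k, Y ≤ n * k → K0 ≤ S * k) ∧
      (2 * (S : ℝ) / (Y / L)) ^ K0 * ((Y : ℝ) ^ Y) ^ c' ≤ 1 := by
  obtain ⟨S, hS⟩ : ∃ S : ℕ, S = 2 * n ^ 2 * c' := ⟨_, rfl⟩
  have hn1 : 1 ≤ n := by omega
  have hS1 : 1 ≤ S := by
    have : 0 < S := by rw [hS]; positivity
    omega
  set X : ℕ := ⌈c⌉₊ + 4 * S ^ 2 + (4 * S ^ 2) ^ (2 * n) + 2 with hX
  have hX1 : 1 ≤ X := by omega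
  obtain ⟨k, rfl⟩ : ∃ k, n = k + 1 := ⟨n - 1, by omega⟩
  refine ⟨S, X ^ (k + 1), 2 * S * X ^ k, hS1, ?_, Nat.one_le_pow _ _ hX1, ?_, ?_⟩
  · have : 0 < 2 * S * X ^ k := by positivity
    omega
  · calc 2 * ((X ^ (k + 1)) ^ m * S ^ (k + 1)) ≤ 2 ^ (k + 1) * ((X ^ (k + 1)) ^ k * S ^ (k + 1)) := by
          gcongr
          · exact le_self_pow₀ (by norm_num) (by omega)
          · exact Nat.one_le_pow _ _ hX1
          · omega
      _ = _ := by rw [← pow_mul, mul_pow, mul_pow, ← pow_mul]; ring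
  · intro Y hY
    have hXY : X ≤ Y := (le_self_pow₀ hX1 (by omega)).trans hY
    have h4 : 4 * S ^ 2 * X ^ k ≤ Y := by
      calc 4 * S ^ 2 * X ^ k ≤ X * X ^ k := by gcongr; omega
        _ = X ^ (k + 1) := by ring
        _ ≤ Y := hY
    have hXR : (1 : ℝ) ≤ X := by exact_mod_cast hX1
    have hSR : (1 : ℝ) ≤ S := by exact_mod_cast hS1
    have hY2 : 2 ≤ Y := by omega
    have hYR : (2 : ℝ) ≤ Y := by exact_mod_cast hY2
    refine ⟨hY2, ?_, ?_, 2 * (k + 1) * c' * Y, ?_, ?_, ?_⟩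
    · refine le_trans ?_ h4
      calc 2 * S * X ^ k * S = 2 * S ^ 2 * X ^ k := by ring
        _ ≤ _ := by gcongr; omega
    · refine (Nat.le_ceil c).trans ?_
      have : ⌈c⌉₊ ≤ Y := by omega
      exact_mod_cast this
    · rw [le_div_iff₀ (by positivity)]
      have h4' : 4 * (S : ℝ) ^ 2 * X ^ k ≤ Y := by exact_mod_cast h4
      push_cast
      nlinarith
    · intro j hj
      calc 2 * (k + 1) * c' * Y ≤ 2 * (k + 1) * c' * ((k + 1) * j) := by gcongr
        _ = S * j := by rw [hS]; ring
    · have key : (2 * (S : ℝ) / (Y / (2 * S * X ^ k : ℕ))) ^ (2 * (k + 1)) * Y ≤ 1 := by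
        have e : 2 * (S : ℝ) / (Y / (2 * S * X ^ k : ℕ)) = (4 * S ^ 2 * X ^ k) / Y := by
          push_cast; field_simp; ring
        rw [e, div_pow, div_mul_eq_mul_div, div_le_one (by positivity)]
        have h5 : ((X : ℝ) ^ k) ^ (2 * (k + 1)) ≤ (Y : ℝ) ^ (2 * k) := by
          rw [show ((X : ℝ) ^ k) ^ (2 * (k + 1)) = (X ^ (k + 1)) ^ (2 * k) by
            rw [← pow_mul, ← pow_mul]; ring_nf]
          gcongr
          exact_mod_cast hY
        have h6 : (4 * (S : ℝ) ^ 2) ^ (2 * (k + 1)) ≤ Y := by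
          have : (4 * S ^ 2) ^ (2 * (k + 1)) ≤ Y := by omega
          exact_mod_cast this
        rw [mul_pow]
        calc _ ≤ (Y : ℝ) * Y ^ (2 * k) * Y := by gcongr
          _ = _ := by ring
      have e2 : (2 * (S : ℝ) / (Y / (2 * S * X ^ k : ℕ))) ^ (2 * (k + 1) * c' * Y) * ((Y : ℝ) ^ Y) ^ c' =
          ((2 * (S : ℝ) / (Y / (2 * S * X ^ k : ℕ))) ^ (2 * (k + 1)) * Y) ^ (c' * Y) := by
        generalize 2 * (S : ℝ) / (Y / (2 * S * X ^ k : ℕ)) = w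
        rw [mul_pow, ← pow_mul, ← pow_mul, mul_assoc, mul_comm Y c']
      rw [e2]
      exact pow_le_one₀ (by positivity) key

section main
variable {K : Type} [Field K] [NumberField K] {ι : Type} [Fintype ι]

lemma erd_house_mul (x y : K) (A B : ℝ) (hx : house x ≤ A) (hy : house y ≤ B) : house (x * y) ≤ A * B :=
  (house_mul_le x y).trans (mul_le_mul hx hy (house_nonneg _) ((house_nonneg _).trans hx))

lemma erd_auxfn (C : ℝ)
    (hCS : ∀ (ρ γ : Type) [Fintype ρ] [Fintype γ] (a : Matrix ρ γ (𝓞 K)), a ≠ 0 → 0 < Fintype.card ρ →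
      2 * Fintype.card ρ ≤ Fintype.card γ → ∀ A : ℝ, 1 ≤ A → (∀ k l, house (a k l : K) ≤ A) →
      ∃ ξ : γ → 𝓞 K, ξ ≠ 0 ∧ a.mulVec ξ = 0 ∧
        ∀ l, house (ξ l : K) ≤ C * (C * Fintype.card γ * A))
    {Λ J Q : Type} [Fintype Λ] [Fintype J] [Fintype Q] [Nonempty Λ] [Nonempty Q] (n T : ℕ) (hJ : Fintype.card J ≤ n)
    (hT : 1 ≤ T) (b : Λ → J → 𝓞 K) (W : Λ → Q → 𝓞 K) (B B2 : ℝ) (hB : 1 ≤ B) (hB2 : 1 ≤ B2)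
    (hb : ∀ l j, house (b l j : K) ≤ B) (hW : ∀ l s, house (W l s : K) ≤ B2) (hW0 : ∀ l s, W l s ≠ 0)
    (hcard : 2 * (T ^ Fintype.card J * Fintype.card Q) ≤ Fintype.card Λ) :
    ∃ p : Λ → 𝓞 K, p ≠ 0 ∧ (∀ l, house (p l : K) ≤ C * (C * Fintype.card Λ * (B ^ (n * T) * B2))) ∧
      ∀ w : Multiset J, w.card < T → ∀ s, ∑ l, p l * (w.map (b l)).prod * W l s = 0 := by
  classical
  let a : Matrix ((J → Fin T) × Q) Λ (𝓞 K) := fun k l => (∏ j, b l j ^ (k.1 j : ℕ)) * W l k.2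
  have hTp : 0 < T := hT
  have : NeZero T := ⟨by omega⟩
  have hh : ∃ ξ : Λ → 𝓞 K, ξ ≠ 0 ∧ a.mulVec ξ = 0 ∧
      ∀ l, house (ξ l : K) ≤ C * (C * Fintype.card Λ * (B ^ (n * T) * B2)) := by
    refine hCS ((J → Fin T) × Q) Λ a ?_ ?_ ?_ (B ^ (n * T) * B2) ?_ ?_
    · intro h0
      obtain ⟨l⟩ := ‹Nonempty Λ›
      obtain ⟨s⟩ := ‹Nonempty Q›
      have := congrFun (congrFun h0 (fun _ => 0, s)) l
      simp [a] at this
      exact hW0 _ _ this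
    · exact Fintype.card_pos
    · simpa [Fintype.card_prod, Fintype.card_fun] using hcard
    · exact one_le_mul_of_one_le_of_one_le (one_le_pow₀ hB) hB2
    · intro k l
      simp only [a]
      push_cast
      refine erd_house_mul _ _ _ _ ?_ (hW _ _)
      refine (erd_house_prod _ _ (fun _ => B ^ T) ?_).trans ?_
      · intro j _
        refine (house_pow_le _ _).trans ?_
        calc house (b l j : K) ^ (k.1 j : ℕ) ≤ B ^ (k.1 j : ℕ) := by
              gcongr
              · exact house_nonneg _
              · exact hb l j
          _ ≤ B ^ T := pow_le_pow_right₀ hB (k.1 j).2.le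
      · rw [Finset.prod_const, ← pow_mul]
        exact pow_le_pow_right₀ hB (by rw [mul_comm, Finset.card_univ]; gcongr)
  obtain ⟨p, hp0, hpm, hph⟩ := hh
  · refine ⟨p, hp0, hph, fun w hw s => ?_⟩
    have h1 := congrFun hpm (fun j => ⟨w.count j, (Multiset.count_le_card j w).trans_lt hw⟩, s)
    rw [Pi.zero_apply] at h1
    rw [← h1]
    simp only [Matrix.mulVec, dotProduct, a]
    refine Finset.sum_congr rfl fun l _ => ?_
    rw [Finset.prod_multiset_map_count]
    rw [Finset.prod_subset (Finset.subset_univ w.toFinset)]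
    · ring
    · intro x _ hx
      rw [Multiset.mem_toFinset] at hx
      simp [Multiset.count_eq_zero_of_notMem hx]

end main

open Filter Topology Finset NumberField

section main
variable {K : Type} [Field K] [NumberField K] {ι : Type} [Fintype ι]

theorem erd_BM [IsGalois ℚ K] (φ : K →+* ℂ) (α : ι → K) (β : ι → 𝓞 K) (ℓ : ι → ℂ)
    (h : ∀ b, φ (α b) = Complex.exp (ℓ b)) (σ1 : K ≃ₐ[ℚ] K) (h1 : erdU φ β ℓ σ1 = 0) (σ : K ≃ₐ[ℚ] K) :
    erdU φ β ℓ σ = 0 := by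
  classical
  by_contra hσ
  have hα : ∀ b, α b ≠ 0 := fun b hb => by
    have := h b
    rw [hb, map_zero] at this
    exact Complex.exp_ne_zero _ this.symm
  let J := {σ : K ≃ₐ[ℚ] K // erdU φ β ℓ σ ≠ 0}
  obtain ⟨n, hn⟩ : ∃ n, n = Module.finrank ℚ K := ⟨_, rfl⟩
  have hI : Fintype.card (ErdI K) = n := by
    rw [← Module.finrank_eq_card_chooseBasisIndex, RingOfIntegers.rank, hn]
  have hm : Fintype.card J + 1 ≤ n := by
    have h2 : Fintype.card J < Fintype.card (K ≃ₐ[ℚ] K) :=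
      Fintype.card_subtype_lt (x := σ1) (by simpa using h1)
    have h3 := IsGalois.card_aut_eq_finrank ℚ K
    rw [Nat.card_eq_fintype_card] at h3
    omega
  choose cd hcd using fun j : J => erd_dual' φ β ℓ j.1 j.2
  obtain ⟨cS, hcS1, hcS⟩ := erd_siegel K
  obtain ⟨cX, hcX1, hcX⟩ := erdXi_house (K := K)
  obtain ⟨cE, hcE1, hcE⟩ := erdE_int α β hα
  obtain ⟨cθ, hcθ1, hcθ⟩ := erdTheta_bound φ β ℓ
  obtain ⟨C5, hC5⟩ : ∃ C5 : ℝ, C5 = ∑ j, ∑ i, ‖cd j i‖ := ⟨_, rfl⟩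
  have hC50 : 0 ≤ C5 := by rw [hC5]; positivity
  obtain ⟨c, hc⟩ : ∃ c : ℝ, c = cS + cX + cE + C5 + cθ + Real.exp (n * cθ) + Real.exp cθ := ⟨_, rfl⟩
  have hx1 := Real.exp_pos (n * cθ)
  have hx2 := Real.exp_pos cθ
  obtain ⟨c', hc'⟩ : ∃ c', c' = 4 * n + 10 + (4 * n + 6) * n + 1 := ⟨_, rfl⟩
  obtain ⟨S, T, L, hS1, hL1, hT1, hcard, hpar⟩ := erd_params n (Fintype.card J) c' hm (by omega) c
  have hL1' : (1 : ℝ) ≤ L := by exact_mod_cast hL1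
  have hS1' : (1 : ℝ) ≤ S := by exact_mod_cast hS1
  have : NeZero L := ⟨by omega⟩
  have : NeZero S := ⟨by omega⟩
  obtain ⟨D, hD0, hDc, hDW⟩ := hcE L S
  have hlin : ∀ {N : ℕ} (l : ErdI K → Fin N) i, (l i : ℕ) ≤ N := fun l i => (l i).2.le
  choose W hW1 hW2 using fun (l : ErdI K → Fin L) (s : ErdI K → Fin S) =>
    hDW (fun i => (l i : ℕ)) (fun i => (s i : ℕ)) (hlin l) (hlin s)
  obtain ⟨ξ, hξ⟩ : ∃ ξ : (ErdI K → Fin L) → 𝓞 K, ξ = fun l => erdXi (fun i => (l i : ℕ)) := ⟨_, rfl⟩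
  have hξinj : Function.Injective ξ := by
    intro l l' hll
    rw [hξ] at hll
    have := erdXi_inj hll
    ext i
    exact congrFun this i
  have hξh : ∀ l, house (ξ l : K) ≤ cX * L := fun l => by rw [hξ]; exact hcX L _ (hlin l)
  have hbh : ∀ l (j : J), house (erdAut j.1 (ξ l) : K) ≤ cX * L := fun l j =>
    (erd_house_aut j.1 _).trans (hξh l)
  have hW0 : ∀ l s, W l s ≠ 0 := by
    intro l s h0
    have := hW1 l s
    rw [h0] at this
    simp only [map_zero] at this
    rcases mul_eq_zero.1 this.symm with h2 | h2
    · exact hD0 (by exact_mod_cast h2)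
    · rw [erdE, Finset.prod_eq_zero_iff] at h2
      obtain ⟨b, _, hb⟩ := h2
      exact zpow_ne_zero _ (hα b) hb
  have hB : 1 ≤ cX * L := one_le_mul_of_one_le_of_one_le hcX1 hL1'
  have hB2 : 1 ≤ cE ^ (L * S) := one_le_pow₀ hcE1
  obtain ⟨p, hp0, hph, hpv⟩ := erd_auxfn cS (fun ρ γ _ _ a => hcS ρ γ a) n T (by omega) hT1
    (fun l (j : J) => erdAut j.1 (ξ l)) W (cX * L) (cE ^ (L * S)) hB hB2 hbh hW2 hW0 (by
      simpa [Fintype.card_fun, hI] using hcard)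
  have hΛ : Fintype.card (ErdI K → Fin L) = L ^ n := by simp [Fintype.card_fun, hI]
  let Z : Multiset J → (ErdI K → Fin S) → 𝓞 K := fun w s =>
    ∑ l, p l * (w.map (fun j : J => erdAut j.1 (ξ l))).prod * W l s
  let pc : (ErdI K → Fin L) → ℂ := fun l => φ (p l)
  let a : (ErdI K → Fin L) → ErdI K → ℂ := fun l i => erdTheta φ β ℓ (ξ l * RingOfIntegers.basis K i)
  let b : (ErdI K → Fin L) → J → ℂ := fun l j => φ (j.1 (ξ l))
  have hbr : ∀ w (s : ErdI K → Fin S), φ (Z w s) = D * erdSum pc a b w 0 (fun i => (s i : ℕ)) := by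
    intro w s
    simp only [Z, erdSum, Finset.mul_sum]
    rw [RingOfIntegers.coe_eq_algebraMap, map_sum, map_sum]
    refine Finset.sum_congr rfl fun l _ => ?_
    have e1 : φ (algebraMap (𝓞 K) K (W l s)) = D * Complex.exp (∑ i, ((s i : ℕ) : ℂ) * a l i) := by
      rw [show algebraMap (𝓞 K) K (W l s) = _ from hW1 l s, map_mul, map_natCast, erdE_exp φ α β ℓ h, erdTheta_xi]
      simp only [a, hξ]
    have e2 : φ (((w.map (fun j : J => erdAut j.1 (ξ l))).prod : 𝓞 K) : K) = (w.map (b l)).prod := by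
      have := Multiset.prod_hom (w.map (fun j : J => erdAut j.1 (ξ l)))
        (φ.comp (algebraMap (𝓞 K) K))
      rw [Multiset.map_map] at this
      exact this.symm
    rw [map_mul, map_mul, map_mul, map_mul, e1]
    rw [show φ ((algebraMap (𝓞 K) K) (w.map (fun j : J => erdAut j.1 (ξ l))).prod) = _ from e2]
    simp only [Multiset.map_zero, Multiset.prod_zero, pc]
    ring
  have hnv : ∃ Y, ∃ w : Multiset J, w.card = Y ∧ ∃ s, Z w s ≠ 0 := by
    by_contra! hcon
    apply hp0
    have h5 := erd_vand (fun l => b l ⟨σ, hσ⟩) (fun l => φ ((p l * W l 0 : 𝓞 K) : K)) ?_ ?_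
    · ext l
      have := congrFun h5 l
      simp only [Pi.zero_apply] at this
      rw [map_eq_zero] at this
      have h6 : p l * W l 0 = 0 := by exact_mod_cast this
      have h7 := (mul_eq_zero.1 h6).resolve_right (hW0 l 0)
      rw [h7]; rfl
    · intro l l' hll
      apply hξinj
      have := σ.injective (φ.injective hll)
      exact_mod_cast this
    · intro k
      have h8 := hcon k (Multiset.replicate k ⟨σ, hσ⟩) (Multiset.card_replicate _ _) 0
      have h9 := congrArg (fun z : 𝓞 K => φ (z : K)) h8
      simp only [Z, map_sum, Multiset.map_replicate, Multiset.prod_replicate, map_zero] at h9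
      refine Eq.trans ?_ h9
      refine Finset.sum_congr rfl fun l _ => ?_
      simp only [map_mul, map_pow, b]
      rw [show (algebraMap (𝓞 K) K) (erdAut σ (ξ l)) = σ (ξ l) from rfl]
      ring
  obtain ⟨w, hwY, s, hZ⟩ := Nat.find_spec hnv
  have hmin := fun m => Nat.find_min hnv (m := m)
  generalize Nat.find hnv = Y at *
  have hTY : T ≤ Y := by
    by_contra! hlt
    exact hZ (hpv w (by omega) s)
  obtain ⟨hY2, hLSY, hcY, K0, hR, hK0, hz⟩ := hpar Y hTY
  have hV : ∀ w : Multiset J, w.card < Y → ∀ s : ErdI K → ℕ, (∀ i, s i < S) → erdSum pc a b w 0 s = 0 := by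
    intro w hw s hs
    have h2 := hmin _ hw
    push Not at h2
    have h3 := hbr w (fun i => ⟨s i, hs i⟩)
    rw [h2 w rfl, RingOfIntegers.coe_eq_algebraMap, map_zero, map_zero] at h3
    rcases mul_eq_zero.1 h3.symm with h4 | h4
    · exact absurd (by exact_mod_cast h4) hD0
    · exact h4
  obtain ⟨Am, hAm⟩ : ∃ Am : ℝ, Am = (cX * L) ^ (n * T) * cE ^ (L * S) := ⟨_, rfl⟩
  obtain ⟨P, hP⟩ : ∃ P : ℝ, P = cS * (cS * (L : ℝ) ^ n * Am) := ⟨_, rfl⟩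
  have hph' : ∀ l, house (p l : K) ≤ P := by
    intro l
    rw [hP, hAm]
    have := hph l
    rw [hΛ] at this
    push_cast at this
    exact this
  have hP0 : 0 ≤ P := (house_nonneg _).trans (hph' 0)
  have hab : ∀ l i, a l i = ∑ j : J, (φ (j.1 (RingOfIntegers.basis K i)) * erdU φ β ℓ j.1) * b l j := by
    intro l i
    simp only [a, erdTheta, b]
    rw [← Finset.sum_subtype (Finset.univ.filter (fun σ => erdU φ β ℓ σ ≠ 0)) (by simp)
      (fun σ : K ≃ₐ[ℚ] K => φ (σ (RingOfIntegers.basis K i)) * erdU φ β ℓ σ * φ (σ (ξ l))), Finset.sum_filter]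
    refine Finset.sum_congr rfl fun τ _ => ?_
    split_ifs with hτ
    · rw [RingOfIntegers.coe_eq_algebraMap, map_mul, map_mul, map_mul]
      ring
    · rw [not_not.1 hτ, mul_zero]
  have hR' : (Y : ℝ) / L > 0 := by
    have : (0:ℝ) < Y := by exact_mod_cast (by omega : 0 < Y)
    positivity
  have hcore := erd_core pc a b _ cd hab (fun l j => hcd j (ξ l)) C5 (cθ * L) P (Y / L) hC50
    (fun j => by
      rw [hC5]
      exact Finset.single_le_sum (f := fun j => ∑ i, ‖cd j i‖) (fun j _ => by positivity) (Finset.mem_univ j))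
    (one_le_mul_of_one_le_of_one_le hcθ1 hL1') (fun l i => by
      simp only [a, hξ]
      exact hcθ L _ (hlin l) i)
    (fun l => (norm_embedding_le_house _ _).trans (hph' l)) hP0 S Y K0 hS1 hR (by rw [hI]; exact hK0) (by omega)
    hV w hwY (fun i => (s i : ℕ)) (fun i => (s i).2)
  rw [hΛ, hI] at hcore
  obtain ⟨H, hH⟩ : ∃ H : ℝ, H = (L : ℝ) ^ n * (P * (cX * L) ^ Y * cE ^ (L * S)) := ⟨_, rfl⟩
  have hZH : house (Z w s : K) ≤ H := by
    simp only [Z]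
    rw [RingOfIntegers.coe_eq_algebraMap, map_sum]
    refine (house_sum_le_sum_house _ _).trans ?_
    refine (Finset.sum_le_sum (g := fun _ => P * (cX * L) ^ Y * cE ^ (L * S)) fun l _ => ?_).trans ?_
    · rw [map_mul, map_mul]
      refine erd_house_mul _ _ _ _ (erd_house_mul _ _ _ _ (hph' l) ?_) (hW2 l s)
      rw [← hwY]
      exact erd_house_mprod w _ _ (hbh l)
    · rw [Finset.sum_const, Finset.card_univ, hΛ, hH, nsmul_eq_mul]
      push_cast
      rfl
  have hfin := erd_liouville φ (Z w s) hZ H hZH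
  rw [← hn] at hfin
  refine erd_numeric n Y L S T K0 c' c cS cX cE C5 cθ Am P H (cθ * L) (Y / L) _
    (Real.exp (n * (S * (cθ * L)))) (Real.exp (cθ * L * (Y / L))) ‖φ (Z w s)‖ hY2 hTY hLSY hL1 hS1 hcY hcS1
    (by linarith) hcX1 (by linarith) hcE1 (by linarith) hC50 (by linarith) hcθ1 (by linarith)
    hAm hP hH rfl ?_ ?_ (Real.exp_pos _).le (Real.exp_pos _).le hc' ?_ hz ?_ hfin
  · rw [show (n : ℝ) * (S * (cθ * L)) = ((L * S : ℕ) : ℝ) * (n * cθ) by push_cast; ring, Real.exp_nat_mul]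
    gcongr
    linarith
  · rw [show cθ * L * ((Y : ℝ) / L) = (Y : ℝ) * cθ by field_simp, Real.exp_nat_mul]
    gcongr
    linarith
  · positivity
  · rw [hbr, norm_mul, Complex.norm_natCast]
    refine mul_le_mul hDc ?_ (norm_nonneg _) (by linarith)
    push_cast at hcore
    exact hcore

end main

open Filter Topology Finset

noncomputable def erdV (s : ℝ) (n : ℕ) : ℝ := ((n : ℝ) + 1) ^ (-s)

lemma erdV_diff_bound (s : ℝ) (h1 : 1 ≤ s) (h2 : s ≤ 2) (n : ℕ) :
    |erdV s n - erdV s (n + 1)| ≤ 2 * (1 / ((n : ℝ) + 1) ^ 2) := by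
  have hn : (0 : ℝ) ≤ n := Nat.cast_nonneg n
  have hB := one_add_mul_self_le_rpow_one_add (s := -(1 / ((n : ℝ) + 2))) (p := s) (by
    rw [neg_le_neg_iff, div_le_one (by positivity)]; linarith) h1
  have e : 1 + -(1 / ((n : ℝ) + 2)) = (n + 1) / (n + 2) := by field_simp; ring
  rw [e] at hB
  have hv : 0 < erdV s n := Real.rpow_pos_of_pos (by positivity) _
  have hr : erdV s (n + 1) = erdV s n * (((n : ℝ) + 1) / (n + 2)) ^ s := by
    simp only [erdV]
    push_cast
    rw [Real.div_rpow (by positivity) (by positivity), Real.rpow_neg (by positivity), Real.rpow_neg (by positivity),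
      show (n : ℝ) + 1 + 1 = n + 2 by ring]
    have : ((n : ℝ) + 1) ^ s ≠ 0 := (Real.rpow_pos_of_pos (by positivity) _).ne'
    field_simp
  have hle : (((n : ℝ) + 1) / (n + 2)) ^ s ≤ 1 := by
    apply Real.rpow_le_one (by positivity) _ (by linarith)
    rw [div_le_one (by positivity)]; linarith
  have hv1 : erdV s n ≤ 1 / ((n : ℝ) + 1) := by
    simp only [erdV]
    rw [one_div, ← Real.rpow_neg_one]
    exact Real.rpow_le_rpow_of_exponent_le (by linarith) (by linarith)
  rw [hr, abs_of_nonneg (by nlinarith)]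
  calc erdV s n - erdV s n * (((n : ℝ) + 1) / (n + 2)) ^ s = erdV s n * (1 - (((n : ℝ) + 1) / (n + 2)) ^ s) := by ring
    _ ≤ (1 / ((n : ℝ) + 1)) * (2 * (1 / ((n : ℝ) + 1))) := by
        gcongr
        · have h3 : s * (1 / ((n : ℝ) + 2)) ≤ 2 * (1 / ((n : ℝ) + 1)) := by gcongr; linarith
          linarith
    _ = _ := by field_simp

lemma erdV_tendsto (s : ℝ) (h1 : 1 ≤ s) : Tendsto (erdV s) atTop (𝓝 0) := by
  have h := (tendsto_rpow_neg_atTop (y := s) (by linarith)).comp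
    (tendsto_atTop_add_const_right _ (1:ℝ) tendsto_natCast_atTop_atTop)
  exact h

noncomputable def erdLam (g : ℕ → ℂ) (s : ℝ) : ℂ :=
  ∑' n : ℕ, ((erdV s n - erdV s (n + 1) : ℝ) : ℂ) * ∑ i ∈ range (n + 1), g i

lemma erd_sq_summable : Summable (fun n : ℕ => 2 * (1 / ((n : ℝ) + 1) ^ 2)) := by
  have := (summable_nat_add_iff 1).2 (Real.summable_one_div_nat_pow.2 (one_lt_two))
  simpa using this.mul_left 2

lemma erdLam_bound (g : ℕ → ℂ) (M : ℝ) (hM : ∀ N, ‖∑ i ∈ range N, g i‖ ≤ M) (s : ℝ) (h1 : 1 ≤ s) (h2 : s ≤ 2) (n : ℕ) :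
    ‖((erdV s n - erdV s (n + 1) : ℝ) : ℂ) * ∑ i ∈ range (n + 1), g i‖ ≤ 2 * (1 / ((n : ℝ) + 1) ^ 2) * M := by
  rw [norm_mul, Complex.norm_real, Real.norm_eq_abs]
  gcongr
  · exact erdV_diff_bound s h1 h2 n
  · exact hM _

lemma erd_abel1 (g : ℕ → ℂ) (M : ℝ) (hM : ∀ N, ‖∑ i ∈ range N, g i‖ ≤ M) (s : ℝ) (h1 : 1 ≤ s) (h2 : s ≤ 2) :
    Tendsto (fun N => ∑ n ∈ range N, (erdV s n : ℂ) * g n) atTop (𝓝 (erdLam g s)) := by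
  have hs : Summable (fun n : ℕ => ((erdV s n - erdV s (n + 1) : ℝ) : ℂ) * ∑ i ∈ range (n + 1), g i) :=
    Summable.of_norm_bounded (erd_sq_summable.mul_right M) (erdLam_bound g M hM s h1 h2)
  have ht := hs.hasSum.tendsto_sum_nat
  have hz : Tendsto (fun N => (erdV s N : ℂ) * ∑ i ∈ range N, g i) atTop (𝓝 0) := by
    have hb : Tendsto (fun N => erdV s N * M) atTop (𝓝 0) := by
      simpa using (erdV_tendsto s h1).mul_const M
    refine squeeze_zero_norm (fun N => ?_) hb
    rw [norm_mul, Complex.norm_real, Real.norm_of_nonneg (show 0 ≤ erdV s N from Real.rpow_nonneg (by positivity) _)]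
    exact mul_le_mul_of_nonneg_left (hM N) (Real.rpow_nonneg (by positivity) _)
  have := ht.add hz
  rw [add_zero] at this
  refine this.congr fun N => ?_
  induction N with
  | zero => simp
  | succ N ih =>
    rw [Finset.sum_range_succ _ N, Finset.sum_range_succ (fun n => (erdV s n : ℂ) * g n) N, ← ih]
    rw [Finset.sum_range_succ g N]
    push_cast
    ring

lemma erd_abel2 (g : ℕ → ℂ) (M : ℝ) (hM : ∀ N, ‖∑ i ∈ range N, g i‖ ≤ M) :
    Tendsto (erdLam g) (𝓝[>] 1) (𝓝 (erdLam g 1)) := by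
  refine tendsto_tsum_of_dominated_convergence (bound := fun n : ℕ => 2 * (1 / ((n : ℝ) + 1) ^ 2) * M)
    (erd_sq_summable.mul_right M) (fun n => ?_) ?_
  · apply Tendsto.mul_const
    refine (Complex.continuous_ofReal.tendsto _).comp ?_
    have hc : ∀ n, Continuous (fun s => erdV s n) := fun n => by
      unfold erdV
      exact Continuous.rpow continuous_const continuous_neg (fun x => Or.inl (by positivity))
    exact (((hc n).sub (hc (n + 1))).tendsto 1).mono_left nhdsWithin_le_nhds
  · have : ∀ᶠ s : ℝ in 𝓝[>] 1, s ∈ Set.Ioo (1:ℝ) 2 := Ioo_mem_nhdsGT (by norm_num)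
    filter_upwards [this] with s hs n
    exact erdLam_bound g M hM s hs.1.le hs.2.le n

section zmod
variable {q : ℕ} [NeZero q]

lemma erd_period_bound (Φ : ZMod q → ℂ) (h0 : ∑ a, Φ a = 0) : ∃ M : ℝ, ∀ N, ‖∑ i ∈ range N, Φ ((i + 1 : ℕ) : ZMod q)‖ ≤ M := by
  have hper : ∀ N, ∑ i ∈ range (N + q), Φ ((i + 1 : ℕ) : ZMod q) = ∑ i ∈ range N, Φ ((i + 1 : ℕ) : ZMod q) := by
    intro N
    rw [Finset.sum_range_add, add_eq_left]
    rw [← h0]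
    refine Finset.sum_bij (fun i _ => ((N + i + 1 : ℕ) : ZMod q)) (fun _ _ => Finset.mem_univ _) ?_ ?_ (fun _ _ => rfl)
    · intro i hi j hj hij
      rw [ZMod.natCast_eq_natCast_iff] at hij
      have h2 : i ≡ j [MOD q] := by
        have := Nat.ModEq.add_right_cancel' 1 hij
        exact Nat.ModEq.add_left_cancel' N this
      exact Nat.ModEq.eq_of_lt_of_lt h2 (Finset.mem_range.1 hi) (Finset.mem_range.1 hj)
    · intro b _
      refine ⟨(b - N - 1 : ZMod q).val, Finset.mem_range.2 (ZMod.val_lt _), ?_⟩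
      push_cast
      rw [ZMod.natCast_zmod_val]
      ring
  refine ⟨∑ N ∈ range q, ‖∑ i ∈ range N, Φ ((i + 1 : ℕ) : ZMod q)‖, fun N => ?_⟩
  have hred : ∀ k r, ∑ i ∈ range (r + k * q), Φ ((i + 1 : ℕ) : ZMod q) = ∑ i ∈ range r, Φ ((i + 1 : ℕ) : ZMod q) := by
    intro k r
    induction k with
    | zero => simp
    | succ k ih => rw [← ih, ← hper (r + k * q)]; congr 2; ring
  rw [← Nat.mod_add_div' N q, hred]
  exact Finset.single_le_sum (f := fun N => ‖∑ i ∈ range N, Φ ((i + 1 : ℕ) : ZMod q)‖) (fun _ _ => norm_nonneg _)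
    (Finset.mem_range.2 (Nat.mod_lt _ (NeZero.pos q)))

/-- convergence at one and the limit of the Dirichlet series -/
lemma erd_conv (Φ : ZMod q → ℂ) (h0 : ∑ a, Φ a = 0) : ∃ l : ℂ,
    Tendsto (fun N => ∑ n ∈ range N, Φ (n : ZMod q) / n) atTop (𝓝 l) ∧
    Tendsto (fun s : ℝ => LSeries (fun n => Φ (n : ZMod q)) s) (𝓝[>] 1) (𝓝 l) := by
  obtain ⟨M, hM⟩ := erd_period_bound Φ h0
  refine ⟨erdLam (fun i => Φ ((i + 1 : ℕ) : ZMod q)) 1, ?_, ?_⟩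
  · have := erd_abel1 _ M hM 1 le_rfl one_le_two
    rw [← tendsto_add_atTop_iff_nat 1]
    refine this.congr fun N => ?_
    rw [Finset.sum_range_succ']
    simp only [Nat.cast_zero, div_zero, add_zero]
    refine Finset.sum_congr rfl fun n _ => ?_
    simp only [erdV, Real.rpow_neg_one]
    push_cast
    rw [div_eq_inv_mul]
  · refine (erd_abel2 _ M hM).congr' ?_
    have : ∀ᶠ s : ℝ in 𝓝[>] 1, s ∈ Set.Ioo (1:ℝ) 2 := Ioo_mem_nhdsGT (by norm_num)
    filter_upwards [this] with s hs
    have h1 := erd_abel1 _ M hM s hs.1.le hs.2.le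
    have hsum : LSeriesSummable (fun n => Φ (n : ZMod q)) s :=
      ZMod.LSeriesSummable_of_one_lt_re Φ (by simpa using hs.1)
    have h2 := hsum.hasSum.tendsto_sum_nat
    rw [← tendsto_add_atTop_iff_nat 1] at h2
    refine tendsto_nhds_unique h1 (h2.congr fun N => ?_)
    rw [Finset.sum_range_succ']
    simp only [LSeries.term_zero, add_zero]
    refine Finset.sum_congr rfl fun n _ => ?_
    rw [LSeries.term_of_ne_zero (by omega), erdV, Complex.ofReal_cpow (by positivity), div_eq_inv_mul]
    push_cast
    rw [Complex.cpow_neg]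

end zmod

open Filter Topology Finset NumberField

section zmod
variable {q : ℕ} [NeZero q]

noncomputable def erdHat (ψ : AddChar (ZMod q) ℂ) (Φ : ZMod q → ℂ) (b : ZMod q) : ℂ := ∑ a, Φ a * ψ (-(a * b))

lemma erd_inv (ψ : AddChar (ZMod q) ℂ) (hψ : ψ.IsPrimitive) (Φ : ZMod q → ℂ) (x : ZMod q) :
    ∑ b, erdHat ψ Φ b * ψ (b * x) = q * Φ x := by
  simp only [erdHat, Finset.sum_mul]
  rw [Finset.sum_comm]
  have : ∀ a, ∑ b, Φ a * ψ (-(a * b)) * ψ (b * x) = if x = a then q * Φ x else 0 := by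
    intro a
    have h1 := AddChar.sum_mulShift (ψ := ψ) (x - a) hψ
    have h2 : ∀ b, Φ a * ψ (-(a * b)) * ψ (b * x) = Φ a * ψ (b * (x - a)) := by
      intro b
      rw [mul_assoc, ← AddChar.map_add_eq_mul]
      congr 2; ring
    rw [Finset.sum_congr rfl fun b _ => h2 b, ← Finset.mul_sum, h1]
    simp only [sub_eq_zero, ZMod.card]
    split_ifs with h
    · rw [h]; ring
    · simp
  rw [Finset.sum_congr rfl fun a _ => this a]
  simp

lemma erd_logs (ψ : AddChar (ZMod q) ℂ) (hψ : ψ.IsPrimitive) (Φ : ZMod q → ℂ) (h0 : ∑ a, Φ a = 0) (l : ℂ)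
    (hl : Tendsto (fun N => ∑ n ∈ range N, Φ (n : ZMod q) / n) atTop (𝓝 l)) :
    ∑ b, erdHat ψ Φ b * Complex.log (1 - ψ b) = - (q * l) := by
  have h00 : erdHat ψ Φ 0 = 0 := by simp [erdHat, h0]
  have hA := Complex.tendsto_tsum_powerSeries_nhdsWithin_lt hl
  rw [tendsto_map'_iff] at hA
  have hev : ∀ᶠ x : ℝ in 𝓝[<] 1, (q : ℂ) * ∑' n : ℕ, Φ (n : ZMod q) / n * (x : ℂ) ^ n =
      ∑ b, erdHat ψ Φ b * -Complex.log (1 - ψ b * x) := by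
    have : ∀ᶠ x : ℝ in 𝓝[<] 1, x ∈ Set.Ioo (0:ℝ) 1 := Ioo_mem_nhdsLT (by norm_num)
    filter_upwards [this] with x hx
    have hs : HasSum (fun n : ℕ => ∑ b, erdHat ψ Φ b * ((ψ b * (x : ℂ)) ^ n / n))
        (∑ b, erdHat ψ Φ b * -Complex.log (1 - ψ b * x)) := by
      refine hasSum_sum fun b _ => (Complex.hasSum_taylorSeries_neg_log ?_).mul_left _
      rw [norm_mul, AddChar.norm_apply, one_mul, Complex.norm_real, Real.norm_of_nonneg hx.1.le]
      exact hx.2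
    rw [← hs.tsum_eq, ← tsum_mul_left]
    refine tsum_congr fun n => ?_
    have := erd_inv ψ hψ Φ (n : ZMod q)
    rw [← mul_assoc, ← mul_div_assoc, ← this, Finset.sum_div, Finset.sum_mul]
    refine Finset.sum_congr rfl fun b _ => ?_
    rw [mul_pow, ← AddChar.map_nsmul_eq_pow, nsmul_eq_mul, mul_comm (n : ZMod q) b]
    ring
  have hB : Tendsto (fun x : ℝ => ∑ b, erdHat ψ Φ b * -Complex.log (1 - ψ b * x)) (𝓝[<] 1)
      (𝓝 (∑ b, erdHat ψ Φ b * -Complex.log (1 - ψ b))) := by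
    refine tendsto_finsetSum _ fun b _ => ?_
    by_cases hb : b = 0
    · rw [hb, h00]; simp
    · apply Tendsto.const_mul
      apply Tendsto.neg
      have hne : ψ b ≠ 1 := fun h => hb ((AddChar.IsPrimitive.zmod_char_eq_one_iff q hψ b).1 h)
      have hslit : 1 - ψ b ∈ Complex.slitPlane := by
        left
        have hn : ‖ψ b‖ = 1 := AddChar.norm_apply ψ b
        have hre : (ψ b).re ≤ 1 := hn ▸ Complex.re_le_norm _
        rcases hre.lt_or_eq with h | h
        · simp; exact h
        · exfalso
          apply hne
          have h2 : (ψ b).re ^ 2 + (ψ b).im ^ 2 = 1 := by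
            have := Complex.sq_norm (ψ b)
            rw [hn, Complex.normSq_apply] at this
            nlinarith
          rw [h] at h2
          apply Complex.ext
          · simpa using h
          · simp; nlinarith
      have hcont : ContinuousAt (fun x : ℝ => Complex.log (1 - ψ b * x)) 1 := by
        have hin : ContinuousAt (fun x : ℝ => 1 - ψ b * (x : ℂ)) 1 := by fun_prop
        exact hin.clog (by simpa using hslit)
      have := hcont.tendsto.mono_left (nhdsWithin_le_nhds (s := Set.Iio 1))
      simpa using this
  have hC := (hA.const_mul (q : ℂ)).congr' hev
  have := tendsto_nhds_unique hB hC
  rw [← this, ← Finset.sum_neg_distrib]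
  exact Finset.sum_congr rfl fun b _ => by ring

theorem erd_conj (F : ZMod q → ℤ) (hF0 : ∑ a, F a = 0)
    (hl : Tendsto (fun N => ∑ n ∈ range N, ((F (n : ZMod q) : ℤ) : ℂ) / n) atTop (𝓝 0)) (h : (ZMod q)ˣ) :
    Tendsto (fun s : ℝ => LSeries (fun n => ((F ((h : ZMod q) * (n : ZMod q)) : ℤ) : ℂ)) s) (𝓝[>] 1) (𝓝 0) := by
  classical
  have hF0' : ∑ a, ((F a : ℤ) : ℂ) = 0 := by exact_mod_cast hF0
  have hF0h : ∑ a : ZMod q, ((F ((h : ZMod q) * a) : ℤ) : ℂ) = 0 := by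
    rw [← hF0']
    exact Equiv.sum_comp (Units.mulLeft h) (fun a => ((F a : ℤ) : ℂ))
  obtain ⟨l, hl1, hl2⟩ := erd_conv (fun a : ZMod q => ((F ((h : ZMod q) * a) : ℤ) : ℂ)) hF0h
  suffices l = 0 by rw [← this]; exact hl2
  let K := CyclotomicField q ℚ
  haveI : NeZero ((q : ℕ) : ℚ) := ⟨by exact_mod_cast NeZero.ne q⟩
  haveI : IsCyclotomicExtension {q} ℚ K := CyclotomicField.isCyclotomicExtension q ℚ
  haveI : NumberField K := IsCyclotomicExtension.numberField {q} ℚ K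
  have : IsGalois ℚ K := IsCyclotomicExtension.isGalois {q} ℚ K
  have hζ := IsCyclotomicExtension.zeta_spec q ℚ K
  obtain ⟨ζ, hζe⟩ : ∃ ζ : K, ζ = IsCyclotomicExtension.zeta q ℚ K := ⟨_, rfl⟩
  rw [← hζe] at hζ
  obtain ⟨φ⟩ : Nonempty (K →+* ℂ) := inferInstance
  have hζC : IsPrimitiveRoot (φ ζ) q := hζ.map_of_injective φ.injective
  let ψ := AddChar.zmodChar q hζC.pow_eq_one
  have hψ : ψ.IsPrimitive := AddChar.zmodChar_primitive_of_primitive_root q hζC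
  have hψa : ∀ a, ψ a = φ (ζ ^ a.val) := fun a => by rw [map_pow]; exact AddChar.zmodChar_apply _ _
  let z : 𝓞 K := hζ.toInteger
  have hz : (z : K) = ζ := rfl
  let β : ZMod q → 𝓞 K := fun b => ∑ a, (F a : 𝓞 K) * z ^ (-(a * b)).val
  let α : ZMod q → K := fun b => if b = 0 then 1 else 1 - ζ ^ b.val
  let ℓ : ZMod q → ℂ := fun b => Complex.log (1 - ψ b)
  have hαℓ : ∀ b, φ (α b) = Complex.exp (ℓ b) := by
    intro b
    by_cases hb : b = 0
    · simp [α, ℓ, hb]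
    · have hne : ψ b ≠ 1 := fun h => hb ((AddChar.IsPrimitive.zmod_char_eq_one_iff q hψ b).1 h)
      simp only [α, ℓ, hb, if_false]
      rw [Complex.exp_log (sub_ne_zero.2 hne.symm), map_sub, map_one, hψa]
  have hβ : ∀ (σ : K ≃ₐ[ℚ] K) b, φ (σ (β b)) = ∑ a, ((F a : ℤ) : ℂ) * φ (σ (ζ ^ (-(a * b)).val)) := by
    intro σ b
    have : (β b : K) = ∑ a, (F a : K) * ζ ^ (-(a * b)).val := by
      simp only [β]
      rw [RingOfIntegers.coe_eq_algebraMap, map_sum]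
      refine Finset.sum_congr rfl fun a _ => ?_
      rw [map_mul, map_intCast, map_pow]
      rfl
    rw [this, map_sum, map_sum]
    refine Finset.sum_congr rfl fun a _ => ?_
    rw [map_mul, map_mul, map_intCast, map_intCast]
  have hU1 : erdU φ β ℓ (AlgEquiv.refl) = 0 := by
    have := erd_logs ψ hψ (fun a => ((F a : ℤ) : ℂ)) hF0' 0 hl
    rw [mul_zero, neg_zero] at this
    rw [← this, erdU]
    refine Finset.sum_congr rfl fun b _ => ?_
    rw [hβ, erdHat]
    congr 1
    exact Finset.sum_congr rfl fun a _ => by rw [hψa]; rfl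
  let σ : K ≃ₐ[ℚ] K := (IsCyclotomicExtension.autEquivPow K
    (Polynomial.cyclotomic.irreducible_rat (NeZero.pos q))).symm h⁻¹
  have hσ : σ ζ = ζ ^ ((h⁻¹ : (ZMod q)ˣ) : ZMod q).val := by
    have h1 : (IsCyclotomicExtension.autEquivPow K
      (Polynomial.cyclotomic.irreducible_rat (NeZero.pos q))) σ = h⁻¹ := MulEquiv.apply_symm_apply _ _
    have h2 := IsPrimitiveRoot.autToPow_spec ℚ (IsCyclotomicExtension.zeta_spec q ℚ K) σ
    rw [hζe, ← h2, ← h1]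
    rfl
  have hU2 := erd_BM φ α β ℓ hαℓ AlgEquiv.refl hU1 σ
  have h3 := erd_logs ψ hψ (fun a : ZMod q => ((F ((h : ZMod q) * a) : ℤ) : ℂ)) hF0h l hl1
  have h4 : ∑ b, erdHat ψ (fun a : ZMod q => ((F ((h : ZMod q) * a) : ℤ) : ℂ)) b * Complex.log (1 - ψ b) = erdU φ β ℓ σ := by
    rw [erdU]
    refine Finset.sum_congr rfl fun b _ => ?_
    rw [hβ, erdHat]
    congr 1
    refine Eq.trans ?_ (Equiv.sum_comp (Units.mulLeft h) (fun a : ZMod q => ((F a : ℤ) : ℂ) * φ (σ (ζ ^ (-(a * b)).val))))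
    refine Finset.sum_congr rfl fun a _ => ?_
    simp only [Units.mulLeft_apply]
    congr 1
    rw [map_pow, hσ, ← pow_mul, map_pow]
    have h5 : (φ ζ) ^ (((h⁻¹ : (ZMod q)ˣ) : ZMod q).val * (-(h * a * b) : ZMod q).val) = ψ (((h⁻¹ : (ZMod q)ˣ) : ZMod q) * (-(h * a * b) : ZMod q)) := by
      rw [hψa, map_pow, ZMod.val_mul]
      exact pow_eq_pow_mod _ hζC.pow_eq_one
    rw [h5]
    congr 1
    rw [mul_neg, mul_assoc, ← mul_assoc, Units.inv_mul, one_mul]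
  rw [h4, hU2] at h3
  have hq : (q : ℂ) ≠ 0 := by exact_mod_cast NeZero.ne q
  have := neg_eq_zero.1 h3.symm
  exact (mul_eq_zero.1 this).resolve_left hq

end zmod

open Filter Topology Finset NumberField

section okada
variable {q : ℕ} [NeZero q]

noncomputable def erdTw (χ : DirichletCharacter ℂ q) (G : ZMod q → ℂ) (x : ZMod q) : ℂ :=
  ∑ h : (ZMod q)ˣ, χ ((h⁻¹ : (ZMod q)ˣ) : ZMod q) * G ((h : ZMod q) * x)

lemma erdTw_mul (χ : DirichletCharacter ℂ q) (G : ZMod q → ℂ) (a : (ZMod q)ˣ) (x : ZMod q) :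
    erdTw χ G ((a : ZMod q) * x) = χ (a : ZMod q) * erdTw χ G x := by
  simp only [erdTw]
  rw [← Equiv.sum_comp (Equiv.mulRight a) (fun h : (ZMod q)ˣ => χ ((h⁻¹ : (ZMod q)ˣ) : ZMod q) * G ((h : ZMod q) * x)), Finset.mul_sum]
  refine Finset.sum_congr rfl fun h _ => ?_
  simp only [Equiv.coe_mulRight, mul_inv_rev, Units.val_mul, map_mul, ← mul_assoc]
  have : χ (a : ZMod q) * χ ((a⁻¹ : (ZMod q)ˣ) : ZMod q) = 1 := by
    rw [← map_mul, Units.mul_inv, map_one]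
  rw [this, one_mul]

lemma erdTw_sum (G : ZMod q → ℂ) (x : ZMod q) :
    ∑ χ : DirichletCharacter ℂ q, erdTw χ G x = (q.totient : ℂ) * G x := by
  simp only [erdTw]
  rw [Finset.sum_comm]
  simp only [← Finset.sum_mul]
  rw [Finset.sum_eq_single 1]
  · rw [DirichletCharacter.sum_characters_eq ℂ]; simp
  · intro h _ hh
    rw [DirichletCharacter.sum_characters_eq ℂ, if_neg, zero_mul]
    intro h1
    apply hh
    rw [← inv_inv h, inv_eq_one]
    exact Units.ext h1
  · simp

lemma erd_split (q : ℕ) [NeZero q] (n : ℕ) : n ≠ 0 → ∃ m a, n = m * a ∧ m ∈ Nat.factoredNumbers q.primeFactors ∧ a.Coprime q := by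
  induction n using Nat.strong_induction_on with
  | _ n ih =>
    intro hn
    by_cases hc : n.Coprime q
    · exact ⟨1, n, by simp, by simp [Nat.mem_factoredNumbers], hc⟩
    · obtain ⟨p, hp, h1, h2⟩ := Nat.Prime.not_coprime_iff_dvd.1 hc
      obtain ⟨k, rfl⟩ := h1
      have hk : k ≠ 0 := by rintro rfl; simp at hn
      obtain ⟨m, a, h3, h4, h5⟩ := ih k (by
        have := hp.two_le
        have := Nat.pos_of_ne_zero hk
        nlinarith) hk
      refine ⟨p * m, a, by rw [h3, mul_assoc], ?_, h5⟩
      apply Nat.mul_mem_factoredNumbers _ h4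
      rw [Nat.mem_factoredNumbers_iff_primeFactors_subset]
      refine ⟨hp.ne_zero, ?_⟩
      rw [hp.primeFactors]
      simp [hp, h2, NeZero.ne q]

lemma erd_fac_coprime {m a : ℕ} (hm : m ∈ Nat.factoredNumbers q.primeFactors) (ha : a.Coprime q) : m.Coprime a := by
  by_contra hc
  obtain ⟨p, hp, h1, h2⟩ := Nat.Prime.not_coprime_iff_dvd.1 hc
  have h3 := (Nat.mem_factoredNumbers'.1 hm) p hp h1
  have h4 : p ∣ q := Nat.dvd_of_mem_primeFactors h3
  exact Nat.Prime.not_coprime_iff_dvd.2 ⟨p, hp, h2, h4⟩ ha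

lemma erd_convol (χ : DirichletCharacter ℂ q) (Φ : ZMod q → ℂ)
    (hΦ : ∀ (a : (ZMod q)ˣ) x, Φ ((a : ZMod q) * x) = χ (a : ZMod q) * Φ x) (n : ℕ) (hn : n ≠ 0) :
    LSeries.convolution (fun m => if m ∈ Nat.factoredNumbers q.primeFactors then Φ (m : ZMod q) else 0)
      (fun m => χ (m : ZMod q)) n = Φ (n : ZMod q) := by
  obtain ⟨m, a, rfl, hm, ha⟩ := erd_split q n hn
  rw [LSeries.convolution_def]; beta_reduce
  rw [Finset.sum_eq_single (m, a)]
  · simp only [hm, if_true]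
    have := hΦ (ZMod.unitOfCoprime a ha) m
    rw [ZMod.coe_unitOfCoprime] at this
    rw [mul_comm, ← this]; push_cast; rw [mul_comm]
  · rintro ⟨m', a'⟩ h1 h2
    rw [Nat.mem_divisorsAntidiagonal] at h1
    simp only
    by_cases hm' : m' ∈ Nat.factoredNumbers q.primeFactors
    · by_cases ha' : a'.Coprime q
      · exfalso
        have e : m' * a' = m * a := h1.1
        have c1 := erd_fac_coprime hm ha'
        have c2 := erd_fac_coprime hm' ha
        have d1 : m ∣ m' := c1.dvd_of_dvd_mul_right (e ▸ dvd_mul_right m a)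
        have d2 : m' ∣ m := c2.dvd_of_dvd_mul_right (e ▸ dvd_mul_right m' a')
        have e1 := Nat.dvd_antisymm d1 d2
        subst e1
        have e2 := Nat.eq_of_mul_eq_mul_left (Nat.pos_of_ne_zero hm.1) e
        exact h2 (by rw [e2])
      · have : χ (a' : ZMod q) = 0 := by
          apply MulChar.map_nonunit
          rwa [ZMod.isUnit_iff_coprime]
        rw [this, mul_zero]
    · simp [hm']
  · intro h
    exact absurd (Nat.mem_divisorsAntidiagonal.2 ⟨rfl, hn⟩) h

lemma erd_fac_summable (s : Finset ℕ) :
    Summable (fun m : ℕ => if m ∈ Nat.factoredNumbers s then (m : ℝ)⁻¹ else 0) := by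
  let f : ℕ →* ℝ := { toFun := fun n => (n : ℝ)⁻¹, map_one' := by simp, map_mul' := fun a b => by push_cast; rw [mul_inv] }
  have h := (EulerProduct.summable_and_hasSum_factoredNumbers_prod_filter_prime_geometric (f := f) (by
    intro p hp
    have : (1:ℝ) < p := by exact_mod_cast hp.one_lt
    simp only [f, MonoidHom.coe_mk, OneHom.coe_mk, norm_inv]
    rw [Real.norm_of_nonneg (by positivity)]
    exact inv_lt_one_of_one_lt₀ this) s).2.summable
  have h2 := (summable_subtype_iff_indicator (f := fun n : ℕ => (n:ℝ)⁻¹) (s := Nat.factoredNumbers s)).1 h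
  refine h2.congr fun m => ?_
  rw [Set.indicator_apply]

lemma erd_bdd (Φ : ZMod q → ℂ) : ∃ C, 0 ≤ C ∧ ∀ x, ‖Φ x‖ ≤ C :=
  ⟨∑ x, ‖Φ x‖, Finset.sum_nonneg fun _ _ => norm_nonneg _, fun x =>
    Finset.single_le_sum (f := fun x => ‖Φ x‖) (fun _ _ => norm_nonneg _) (Finset.mem_univ x)⟩

lemma erd_fac_summable' (Φ : ZMod q → ℂ) :
    Summable (fun m : ℕ => if m ∈ Nat.factoredNumbers q.primeFactors then Φ (m : ZMod q) / m else 0) := by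
  obtain ⟨C, hC, hb⟩ := erd_bdd Φ
  refine Summable.of_norm_bounded ((erd_fac_summable q.primeFactors).mul_left C) fun m => ?_
  split_ifs
  · rw [norm_div, Complex.norm_natCast, div_eq_mul_inv]
    gcongr; exact hb _
  · simp

lemma erd_term_bound (Φ : ZMod q → ℂ) (C : ℝ) (hb : ∀ x, ‖Φ x‖ ≤ C) (hC : 0 ≤ C) (s : ℝ) (hs : 1 ≤ s) (m : ℕ) :
    ‖LSeries.term (fun m => if m ∈ Nat.factoredNumbers q.primeFactors then Φ (m : ZMod q) else 0) s m‖ ≤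
      C * (if m ∈ Nat.factoredNumbers q.primeFactors then (m : ℝ)⁻¹ else 0) := by
  rcases eq_or_ne m 0 with rfl | hm
  · simp
  · rw [LSeries.term_of_ne_zero hm]
    split_ifs
    · rw [norm_div, Complex.norm_natCast_cpow_of_pos (Nat.pos_of_ne_zero hm), Complex.ofReal_re, div_eq_mul_inv]
      have h1 : (1:ℝ) ≤ m := by exact_mod_cast Nat.pos_of_ne_zero hm
      have h2 : (m : ℝ) ≤ (m : ℝ) ^ s := by
        simpa using Real.rpow_le_rpow_of_exponent_le h1 hs
      have h3 : (0:ℝ) < m := by linarith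
      gcongr
      exact hb _
    · simp

lemma erd_fac_tendsto (Φ : ZMod q → ℂ) :
    Tendsto (fun s : ℝ => LSeries (fun m => if m ∈ Nat.factoredNumbers q.primeFactors then Φ (m : ZMod q) else 0) s)
      (𝓝[>] 1) (𝓝 (∑' m : ℕ, if m ∈ Nat.factoredNumbers q.primeFactors then Φ (m : ZMod q) / m else 0)) := by
  obtain ⟨C, hC, hb⟩ := erd_bdd Φ
  refine tendsto_tsum_of_dominated_convergence ((erd_fac_summable q.primeFactors).mul_left C) ?_ ?_
  · intro m
    rcases eq_or_ne m 0 with rfl | hm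
    · simp [Nat.mem_factoredNumbers]
    · simp only [LSeries.term_of_ne_zero hm]
      split_ifs
      · refine Tendsto.mono_left ?_ (nhdsWithin_le_nhds)
        have hc : ContinuousAt (fun s : ℝ => Φ (m : ZMod q) / (m : ℂ) ^ (s : ℂ)) 1 := by
          have hm' : (m : ℂ) ≠ 0 := by exact_mod_cast hm
          refine ContinuousAt.div continuousAt_const ?_ ?_
          · exact (Complex.continuous_ofReal.continuousAt).const_cpow (Or.inl hm')
          · simp [hm']
        have := hc.tendsto
        simpa using this
      · simp
  · filter_upwards [self_mem_nhdsWithin] with s hs m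
    exact erd_term_bound Φ C hb hC s (le_of_lt hs) m

lemma erd_Cchi (χ : DirichletCharacter ℂ q) (Φ : ZMod q → ℂ)
    (hΦ : ∀ (a : (ZMod q)ˣ) x, Φ ((a : ZMod q) * x) = χ (a : ZMod q) * Φ x)
    (hL : Tendsto (fun s : ℝ => LSeries (fun n => Φ (n : ZMod q)) s) (𝓝[>] 1) (𝓝 0)) :
    (∑' m : ℕ, if m ∈ Nat.factoredNumbers q.primeFactors then Φ (m : ZMod q) / m else 0) = 0 := by
  by_contra hne
  have h1 := erd_fac_tendsto Φ
  have h2 : Tendsto (fun s : ℝ => χ.LFunction s) (𝓝[>] 1) (𝓝 0) := by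
    have h3 := hL.div h1 hne
    rw [zero_div] at h3
    refine h3.congr' ?_
    filter_upwards [self_mem_nhdsWithin, h1.eventually_ne hne] with s hs hs'
    have hs1 : 1 < (s : ℂ).re := by simpa using hs
    simp only [Pi.div_apply]
    rw [div_eq_iff hs', DirichletCharacter.LFunction_eq_LSeries χ hs1, mul_comm, ← LSeries_convolution']
    · exact LSeries_congr (fun {n} hn => (erd_convol χ Φ hΦ n hn).symm) _
    · obtain ⟨C, hC, hb⟩ := erd_bdd Φ
      exact Summable.of_norm_bounded ((erd_fac_summable q.primeFactors).mul_left C)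
        fun m => erd_term_bound Φ C hb hC s (le_of_lt hs) m
    · exact ZMod.LSeriesSummable_of_one_lt_re χ hs1
  have hto : Tendsto (fun s : ℝ => (s : ℂ)) (𝓝[>] 1) (𝓝[≠] 1) := by
    refine tendsto_nhdsWithin_iff.2 ⟨?_, ?_⟩
    · have := (Complex.continuous_ofReal.tendsto 1).mono_left (nhdsWithin_le_nhds (s := Set.Ioi 1))
      simpa using this
    · filter_upwards [self_mem_nhdsWithin] with s hs
      simp only [Set.mem_compl_iff, Set.mem_singleton_iff]
      intro h
      have : s = 1 := by exact_mod_cast h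
      exact absurd this (ne_of_gt hs)
  by_cases hχ : χ = 1
  · subst hχ
    have h4 := (DirichletCharacter.LFunctionTrivChar_residue_one (N := q)).comp hto
    have h5 : Tendsto (fun s : ℝ => ((s : ℂ) - 1) * DirichletCharacter.LFunction (1 : DirichletCharacter ℂ q) s) (𝓝[>] 1) (𝓝 ((1 - 1) * 0)) := by
      refine Tendsto.mul ?_ h2
      exact ((tendsto_nhdsWithin_iff.1 hto).1).sub_const 1
    have h6 := tendsto_nhds_unique h4 h5
    rw [mul_zero, Finset.prod_eq_zero_iff] at h6
    obtain ⟨p, hp, h7⟩ := h6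
    have hp' := Nat.prime_of_mem_primeFactors hp
    have : (p : ℂ) = 1 := by
      rw [sub_eq_zero] at h7
      rw [← inv_inv (p : ℂ), ← h7, inv_one]
    exact hp'.one_lt.ne' (by exact_mod_cast this)
  · have h4 := ((DirichletCharacter.differentiableAt_LFunction χ 1 (Or.inr hχ)).continuousAt.tendsto).comp
      (tendsto_nhdsWithin_iff.1 hto).1
    exact DirichletCharacter.LFunction_apply_one_ne_zero hχ (tendsto_nhds_unique h4 h2)

theorem erd_okada (G : ZMod q → ℂ)
    (hG : ∀ h : (ZMod q)ˣ, Tendsto (fun s : ℝ => LSeries (fun n => G ((h : ZMod q) * (n : ZMod q))) s) (𝓝[>] 1) (𝓝 0)) :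
    (∑' m : ℕ, if m ∈ Nat.factoredNumbers q.primeFactors then G (m : ZMod q) / m else 0) = 0 := by
  have h1 : ∀ χ : DirichletCharacter ℂ q,
      (∑' m : ℕ, if m ∈ Nat.factoredNumbers q.primeFactors then erdTw χ G (m : ZMod q) / m else 0) = 0 := by
    intro χ
    refine erd_Cchi χ _ (erdTw_mul χ G) ?_
    have h2 : Tendsto (fun s : ℝ => ∑ h : (ZMod q)ˣ, χ ((h⁻¹ : (ZMod q)ˣ) : ZMod q) *
        LSeries (fun n => G ((h : ZMod q) * (n : ZMod q))) s) (𝓝[>] 1)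
        (𝓝 (∑ h : (ZMod q)ˣ, χ ((h⁻¹ : (ZMod q)ˣ) : ZMod q) * 0)) :=
      tendsto_finsetSum _ fun h _ => (hG h).const_mul _
    simp only [mul_zero, Finset.sum_const_zero] at h2
    refine h2.congr' ?_
    filter_upwards [self_mem_nhdsWithin] with s hs
    have hs1 : 1 < (s : ℂ).re := by simpa using hs
    have hsum : ∀ h : (ZMod q)ˣ, LSeriesSummable (fun n => G ((h : ZMod q) * (n : ZMod q))) s := fun h =>
      ZMod.LSeriesSummable_of_one_lt_re (fun x => G ((h : ZMod q) * x)) hs1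
    unfold LSeries
    simp only [← tsum_mul_left]
    rw [← Summable.tsum_finsetSum fun h _ => (hsum h).mul_left _]
    refine tsum_congr fun n => ?_
    rcases eq_or_ne n 0 with rfl | hn
    · simp
    · simp only [LSeries.term_of_ne_zero hn, erdTw, Finset.sum_div, mul_div_assoc]
  have h3 : ∑ χ : DirichletCharacter ℂ q,
      (∑' m : ℕ, if m ∈ Nat.factoredNumbers q.primeFactors then erdTw χ G (m : ZMod q) / m else 0) = 0 :=
    Finset.sum_eq_zero fun χ _ => h1 χ
  rw [← Summable.tsum_finsetSum fun χ _ => erd_fac_summable' _] at h3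
  have h4 : ∀ m : ℕ, ∑ χ : DirichletCharacter ℂ q, (if m ∈ Nat.factoredNumbers q.primeFactors then erdTw χ G (m : ZMod q) / m else 0)
      = (q.totient : ℂ) * (if m ∈ Nat.factoredNumbers q.primeFactors then G (m : ZMod q) / m else 0) := by
    intro m
    split_ifs
    · rw [← Finset.sum_div, erdTw_sum, mul_div_assoc]
    · simp
  rw [tsum_congr h4, tsum_mul_left] at h3
  refine (mul_eq_zero.1 h3).resolve_left ?_
  have := (Nat.totient_pos.2 (NeZero.pos q)).ne'
  exact_mod_cast this

end okada

open Filter Topology Finset NumberField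


section fin

lemma erd_geom (p : ℕ) (hp : 3 ≤ p) :
    HasSum (Set.indicator (Set.range fun j : ℕ => p ^ (j + 1)) (fun m : ℕ => (m : ℝ)⁻¹)) (1 / ((p : ℝ) - 1)) := by
  have hinj : Function.Injective (fun j : ℕ => p ^ (j + 1)) := by
    intro a b h
    have := Nat.pow_right_injective (by omega : 2 ≤ p) h
    omega
  rw [← hinj.hasSum_iff]
  · have hp' : (3:ℝ) ≤ p := by exact_mod_cast hp
    have h1 := (hasSum_geometric_of_lt_one (r := (p : ℝ)⁻¹) (by positivity)
      (inv_lt_one_of_one_lt₀ (by linarith))).mul_left ((p : ℝ)⁻¹)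
    have e : (p : ℝ)⁻¹ * (1 - (p : ℝ)⁻¹)⁻¹ = 1 / ((p : ℝ) - 1) := by
      rw [← mul_inv, mul_sub, mul_inv_cancel₀ (by linarith), mul_one, one_div]
    rw [e] at h1
    refine Eq.mp (congrArg (fun g : ℕ → ℝ => HasSum g (1 / ((p : ℝ) - 1))) (funext fun j => Eq.symm ?_)) h1
    simp only [Function.comp]
    rw [Set.indicator_of_mem (Set.mem_range_self (f := fun j : ℕ => p ^ (j + 1)) j)]
    push_cast
    rw [pow_succ, mul_inv, inv_pow, mul_comm]
  · intro x hx
    exact Set.indicator_of_notMem hx _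

lemma erd_final (q : ℕ) [NeZero q] (F : ZMod q → ℤ) (hb : ∀ x, |F x| ≤ 1) (h0 : F 0 = 0) (h1 : |F 1| = 1)
    (p₁ p₂ : ℕ) (hp1 : 3 ≤ p₁) (hp2 : p₁ < p₂)
    (hm : ∀ m ∈ Nat.factoredNumbers q.primeFactors, m ≠ 1 → ¬ q ∣ m → ∃ j, m = p₁ ^ (j + 1) ∨ m = p₂ ^ (j + 1))
    (hs : (∑' m : ℕ, if m ∈ Nat.factoredNumbers q.primeFactors then ((F (m : ZMod q) : ℤ) : ℂ) / m else 0) = 0) : False := by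
  have hsm := erd_fac_summable' (fun x => ((F x : ℤ) : ℂ))
  rw [hsm.tsum_eq_add_tsum_ite 1] at hs
  have hF1 : ‖((F 1 : ℤ) : ℂ)‖ = 1 := by
    rw [Complex.norm_intCast]; exact_mod_cast h1
  have hone : (1 : ℕ) ∈ Nat.factoredNumbers q.primeFactors := by simp [Nat.mem_factoredNumbers]
  have hu := (erd_geom p₁ hp1).add (erd_geom p₂ (by omega))
  have hbd : ∀ m : ℕ, ‖(if m = 1 then (0:ℂ) else if m ∈ Nat.factoredNumbers q.primeFactors then ((F (m : ZMod q) : ℤ) : ℂ) / m else 0)‖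
      ≤ Set.indicator (Set.range fun j : ℕ => p₁ ^ (j + 1)) (fun m : ℕ => (m : ℝ)⁻¹) m +
        Set.indicator (Set.range fun j : ℕ => p₂ ^ (j + 1)) (fun m : ℕ => (m : ℝ)⁻¹) m := by
    intro m
    have n1 : 0 ≤ Set.indicator (Set.range fun j : ℕ => p₁ ^ (j + 1)) (fun m : ℕ => (m : ℝ)⁻¹) m :=
      Set.indicator_nonneg (fun _ _ => by positivity) _
    have n2 : 0 ≤ Set.indicator (Set.range fun j : ℕ => p₂ ^ (j + 1)) (fun m : ℕ => (m : ℝ)⁻¹) m :=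
      Set.indicator_nonneg (fun _ _ => by positivity) _
    split_ifs with e1 e2
    · simp only [norm_zero]; positivity
    · by_cases hd : q ∣ m
      · rw [(ZMod.natCast_eq_zero_iff m q).2 hd, h0]
        simp only [Int.cast_zero, zero_div, norm_zero]; positivity
      · have hle : ‖((F (m : ZMod q) : ℤ) : ℂ) / m‖ ≤ (m : ℝ)⁻¹ := by
          rw [norm_div, Complex.norm_natCast, Complex.norm_intCast, div_eq_mul_inv]
          have : |((F (m : ZMod q) : ℤ) : ℝ)| ≤ 1 := by exact_mod_cast hb _
          exact mul_le_of_le_one_left (by positivity) this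
        obtain ⟨j, hj | hj⟩ := hm m e2 e1 hd
        · rw [Set.indicator_of_mem (s := Set.range fun j : ℕ => p₁ ^ (j + 1)) ⟨j, hj.symm⟩]; linarith
        · rw [Set.indicator_of_mem (s := Set.range fun j : ℕ => p₂ ^ (j + 1)) ⟨j, hj.symm⟩]; linarith
    · simp only [norm_zero]; positivity
  have hle := tsum_of_norm_bounded hu hbd
  rw [if_pos hone] at hs
  have e3 := eq_neg_of_add_eq_zero_left hs
  have e4 := congrArg norm e3
  rw [norm_neg] at e4
  simp only [Nat.cast_one, div_one] at e4
  rw [hF1] at e4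
  rw [← e4] at hle
  have a1 : (3:ℝ) ≤ p₁ := by exact_mod_cast hp1
  have a2 : (4:ℝ) ≤ p₂ := by
    have : 4 ≤ p₂ := by omega
    exact_mod_cast this
  have b1 : 1 / ((p₁ : ℝ) - 1) ≤ 1 / 2 := one_div_le_one_div_of_le (by norm_num) (by linarith)
  have b2 : 1 / ((p₂ : ℝ) - 1) ≤ 1 / 3 := one_div_le_one_div_of_le (by norm_num) (by linarith)
  linarith

lemma erd_mean (q : ℕ) [NeZero q] (F : ZMod q → ℤ)
    (hl : Tendsto (fun N => ∑ n ∈ range N, ((F (n : ZMod q) : ℤ) : ℂ) / n) atTop (𝓝 0)) : ∑ a, F a = 0 := by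
  by_contra hne
  let M : ℂ := ((∑ a, F a : ℤ) : ℂ) / q
  have hq : (q : ℂ) ≠ 0 := by exact_mod_cast NeZero.ne q
  have hM : M ≠ 0 := div_ne_zero (by exact_mod_cast hne) hq
  obtain ⟨l, hl1, -⟩ := erd_conv (fun a : ZMod q => ((F a : ℤ) : ℂ) - M) (by
    rw [Finset.sum_sub_distrib]
    simp only [Finset.sum_const, Finset.card_univ, ZMod.card, nsmul_eq_mul, M]
    rw [mul_div_cancel₀ _ hq]; push_cast; ring)
  have h2 := (hl.sub hl1).div_const M
  have h3 : ∀ N : ℕ, (∑ n ∈ range N, ((F (n : ZMod q) : ℤ) : ℂ) / n - ∑ n ∈ range N, (((F (n : ZMod q) : ℤ) : ℂ) - M) / n) / M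
      = ((∑ n ∈ range N, 1 / (n : ℝ) : ℝ) : ℂ) := by
    intro N
    rw [← Finset.sum_sub_distrib, Finset.sum_div]
    push_cast
    refine Finset.sum_congr rfl fun n _ => ?_
    rw [← sub_div, sub_sub_cancel, div_right_comm, div_self hM]
  simp only [h3] at h2
  have h4 := (Complex.continuous_re.tendsto _).comp h2
  have h5 := h4.comp (tendsto_add_atTop_nat 1)
  have h6 := Real.tendsto_sum_range_one_div_nat_succ_atTop
  refine not_tendsto_nhds_of_tendsto_atTop h6 _ (h5.congr fun N => ?_)
  simp only [Function.comp, Complex.ofReal_re]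
  rw [Finset.sum_range_succ']
  simp

lemma erd_main (q : ℕ) [NeZero q] (hq : 1 < q) (p₁ p₂ : ℕ) (hp1 : 3 ≤ p₁) (hp2 : p₁ < p₂)
    (hm : ∀ m ∈ Nat.factoredNumbers q.primeFactors, m ≠ 1 → ¬ q ∣ m → ∃ j, m = p₁ ^ (j + 1) ∨ m = p₂ ^ (j + 1)) :
    ErdosConjectureHolds q := by
  rintro ⟨f, ⟨hper, hpm, hz⟩, hlim⟩
  have hper' : ∀ k n : ℕ, 1 ≤ n → f (n + k * q) = f n := by
    intro k
    induction k with
    | zero => intro n _; simp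
    | succ k ih =>
      intro n hn
      rw [add_mul, one_mul, ← add_assoc, hper _ (by omega), ih n hn]
  let F : ZMod q → ℤ := fun a => f (a.val + q)
  have hFn : ∀ n : ℕ, 1 ≤ n → F (n : ZMod q) = f n := by
    intro n hn
    simp only [F]
    rw [ZMod.val_natCast, ← hper' (n / q) (n % q + q) (by omega), ← hper n hn]
    congr 1
    have := Nat.mod_add_div n q
    rw [mul_comm (n / q)]; omega
  have h0 : F 0 = 0 := by
    simp only [F]
    rw [ZMod.val_zero]
    exact hz _ (by omega) (by simp)
  have hb : ∀ x, |F x| ≤ 1 := by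
    intro x
    by_cases hd : q ∣ x.val + q
    · simp only [F]; rw [hz _ (by omega) hd]; simp
    · simp only [F]; rcases hpm _ (by omega) hd with h | h <;> rw [h] <;> simp
  have h1 : |F 1| = 1 := by
    have := hFn 1 le_rfl
    rw [Nat.cast_one] at this
    rw [this]
    rcases hpm 1 le_rfl (by rw [Nat.dvd_one]; omega) with h | h <;> rw [h] <;> simp
  have hl : Tendsto (fun N => ∑ n ∈ range N, ((F (n : ZMod q) : ℤ) : ℂ) / n) atTop (𝓝 0) := by
    rw [← tendsto_add_atTop_iff_nat 1]
    have h2 := (Complex.continuous_ofReal.tendsto _).comp hlim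
    rw [Complex.ofReal_zero] at h2
    refine h2.congr fun N => ?_
    simp only [Function.comp]
    push_cast
    rw [Finset.sum_range_succ', Finset.range_eq_Ico, Nat.cast_zero, Nat.cast_zero, div_zero, add_zero,
      Finset.sum_Ico_add' (fun n : ℕ => ((F (n : ZMod q) : ℤ) : ℂ) / (n : ℂ)) 0 N 1]
    have : Finset.Icc 1 N = Finset.Ico (0 + 1) (N + 1) := by ext; simp
    rw [this]
    refine Finset.sum_congr rfl fun n hn => ?_
    rw [hFn n (by simp at hn; omega)]
  have hsum := erd_mean q F hl
  exact erd_final q F hb h0 h1 p₁ p₂ hp1 hp2 hm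
    (erd_okada (fun x => ((F x : ℤ) : ℂ)) fun h => erd_conj F hsum hl h)

lemma erd_odd3 {p : ℕ} (hp : p.Prime) (ho : Odd p) : 3 ≤ p := by
  have := hp.two_le
  rcases ho with ⟨k, rfl⟩
  omega

lemma erd_powers {m p : ℕ} (hm : m ≠ 0) (h1 : m ≠ 1) (h : ∀ d, d.Prime → d ∣ m → d = p) : ∃ j, m = p ^ (j + 1) := by
  have h2 := Nat.eq_prime_pow_of_unique_prime_dvd hm (fun {d} hd hdm => h d hd hdm)
  cases hj : m.primeFactorsList.length with
  | zero => rw [hj, pow_zero] at h2; exact absurd h2 h1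
  | succ j => exact ⟨j, by rw [hj] at h2; exact h2⟩

lemma erd_two {p₁ p₂ : ℕ} (h1 : p₁.Prime) (h2 : p₂.Prime) (o1 : Odd p₁) (hlt : p₁ < p₂) :
    ErdosConjectureHolds (p₁ * p₂) := by
  have hne : p₁ * p₂ ≠ 0 := mul_ne_zero h1.ne_zero h2.ne_zero
  haveI : NeZero (p₁ * p₂) := ⟨hne⟩
  refine erd_main (p₁ * p₂) (by nlinarith [h1.two_le, h2.two_le]) p₁ p₂ (erd_odd3 h1 o1) hlt ?_
  intro m hm hm1 hd
  have hall : ∀ d, d.Prime → d ∣ m → d = p₁ ∨ d = p₂ := by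
    intro d hd' hdm
    have := Nat.mem_factoredNumbers'.1 hm d hd' hdm
    have h3 := Nat.dvd_of_mem_primeFactors this
    rcases (hd'.dvd_mul).1 h3 with h | h
    · left; exact (Nat.prime_dvd_prime_iff_eq hd' h1).1 h
    · right; exact (Nat.prime_dvd_prime_iff_eq hd' h2).1 h
  by_cases hp : p₁ ∣ m
  · have hp' : ¬ p₂ ∣ m := fun h => hd
      (((Nat.coprime_primes h1 h2).2 hlt.ne).mul_dvd_of_dvd_of_dvd hp h)
    obtain ⟨j, hj⟩ := erd_powers (p := p₁) hm.1 hm1 (fun d a b => (hall d a b).resolve_right fun e => hp' (e ▸ b))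
    exact ⟨j, Or.inl hj⟩
  · obtain ⟨j, hj⟩ := erd_powers (p := p₂) hm.1 hm1 (fun d a b => (hall d a b).resolve_left fun e => hp (e ▸ b))
    exact ⟨j, Or.inr hj⟩

end fin

theorem erdos_true_prime_power_or_two_primes (q : ℕ)
    (h : (∃ p k : ℕ, p.Prime ∧ Odd p ∧ 1 ≤ k ∧ q = p ^ k) ∨
         (∃ p₁ p₂ : ℕ, p₁.Prime ∧ p₂.Prime ∧ Odd p₁ ∧ Odd p₂ ∧ p₁ ≠ p₂ ∧ q = p₁ * p₂)) :
    ErdosConjectureHolds q := by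
  rcases h with ⟨p, k, hp, ho, hk, rfl⟩ | ⟨p₁, p₂, h1, h2, o1, o2, hne, rfl⟩
  · haveI : NeZero (p ^ k) := ⟨pow_ne_zero _ hp.ne_zero⟩
    refine erd_main (p ^ k) (Nat.one_lt_pow (by omega) hp.one_lt) p (p + 1) (erd_odd3 hp ho) (by omega) ?_
    intro m hm hm1 _
    obtain ⟨j, hj⟩ := erd_powers (p := p) hm.1 hm1 (fun d a b => by
      have := Nat.mem_factoredNumbers'.1 hm d a b
      have h3 := Nat.dvd_of_mem_primeFactors this
      exact (Nat.prime_dvd_prime_iff_eq a hp).1 (a.dvd_of_dvd_pow h3))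
    exact ⟨j, Or.inl hj⟩
  · rcases lt_or_gt_of_ne hne with hlt | hlt
    · exact erd_two h1 h2 o1 hlt
    · rw [mul_comm]; exact erd_two h2 h1 o2 hlt
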